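/- arXiv:0910.3573 — 4 statements merged into one kernel-verified Lean document; each statement's English description precedes it below -/
import Mathlib

section
/- Assume that the continuity equation d/dt w_t + ∇·(b_t w_t) = 0 has uniqueness in L∞₊([0,T]; L¹(ℝ^d) ∩ L∞(ℝ^d)). Let f, g ∈ L¹(ℝ^d) ∩ L∞(ℝ^d) be nonnegative, let X be an (f·L^d)-regular Lagrangian flow and Y a (g·L^d)-regular Lagrangian flow, both relative to b. Then X(·,x) = Y(·,x) on [0,T] for L^d-a.e. x in {f > 0} ∩ {g > 0}. -/
open MeasureTheory Set Filter Metric Function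
open scoped ENNReal NNReal Topology

noncomputable section

instance {Ω : Type*} [MeasurableSpace Ω] : MeasurableSpace (ProbabilityMeasure Ω) :=
  Subtype.instMeasurableSpace

variable {E : Type*} [NormedAddCommGroup E] [NormedSpace ℝ E] [MeasureSpace E]

/-- A curve of measures solves the continuity equation `d/dt μ_t + ∇·(b_t μ_t) = 0`
in the sense of distributions on `(0,T) × ℝ^d`. -/
def SolvesContinuityEquation (b : ℝ → E → E) (T : ℝ) (μ : ℝ → Measure E) : Prop :=
  ∀ φ : E → ℝ, ContDiff ℝ (⊤ : ℕ∞) φ → HasCompactSupport φ →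
  ∀ ψ : ℝ → ℝ, ContDiff ℝ (⊤ : ℕ∞) ψ → HasCompactSupport ψ → tsupport ψ ⊆ Ioo 0 T →
  ∫ t in Ioo 0 T,
      (deriv ψ t * ∫ x, φ x ∂(μ t) + ψ t * ∫ x, (fderiv ℝ φ x) (b t x) ∂(μ t)) = 0

/-- Weak-* continuity of a curve of measures on `[0,T]`. -/
def WeaklyContinuous (T : ℝ) (μ : ℝ → Measure E) : Prop :=
  ∀ φ : E → ℝ, Continuous φ → HasCompactSupport φ →
    ContinuousOn (fun t => ∫ x, φ x ∂(μ t)) (Icc 0 T)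

/-- Membership in the class `L∞₊([0,T]; L¹ ∩ L∞)`, phrased for the measures `μ t = w t · L^d`:
uniformly finite mass (`L¹`) and uniformly bounded density (`L∞`, nonnegativity is automatic). -/
def InL1LinftyClass (T : ℝ) (μ : ℝ → Measure E) : Prop :=
  ∃ C : ℝ≥0, ∀ t ∈ Icc 0 T, μ t Set.univ ≤ (C : ℝ≥0∞) ∧ μ t ≤ C • (volume : Measure E)

/-- Uniqueness for the continuity equation in `L∞₊([0,T]; L¹ ∩ L∞)`. -/
def CEUniqueness (b : ℝ → E → E) (T : ℝ) : Prop :=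
  ∀ μ₁ μ₂ : ℝ → Measure E, InL1LinftyClass T μ₁ → InL1LinftyClass T μ₂ →
    WeaklyContinuous T μ₁ → WeaklyContinuous T μ₂ →
    SolvesContinuityEquation b T μ₁ → SolvesContinuityEquation b T μ₂ →
    μ₁ 0 = μ₂ 0 → ∀ t ∈ Icc 0 T, μ₁ t = μ₂ t

/-- Existence for the continuity equation in `L∞₊([0,T]; L¹ ∩ L∞)`. -/
def CEExistence (b : ℝ → E → E) (T : ℝ) : Prop :=
  ∀ ν : Measure E, (∃ C : ℝ≥0, ν Set.univ ≤ (C : ℝ≥0∞) ∧ ν ≤ C • (volume : Measure E)) →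
    ∃ μ : ℝ → Measure E, μ 0 = ν ∧ InL1LinftyClass T μ ∧ WeaklyContinuous T μ ∧
      SolvesContinuityEquation b T μ

/-- `X` is a `ν`-regular Lagrangian flow relative to `b`:
(i) for `ν`-a.e. `x`, `t ↦ X t x` is an absolutely continuous integral solution of the ODE
`Ẋ = b_t(X)` on `[0,T]` with `X 0 x = x`;
(ii) `X(t,·)_♯ ν ≤ C · L^d` for all `t ∈ [0,T]`. -/
def IsRLF (b : ℝ → E → E) (T : ℝ) (ν : Measure E) (X : ℝ → E → E) : Prop :=
  (∀ᵐ x ∂ν,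
      X 0 x = x ∧
      IntegrableOn (fun s => b s (X s x)) (Icc 0 T) ∧
      ∀ t ∈ Icc 0 T, X t x = x + ∫ s in (0:ℝ)..t, b s (X s x)) ∧
  (∀ t ∈ Icc 0 T, AEMeasurable (X t) ν) ∧
  ∃ C : ℝ≥0, ∀ t ∈ Icc 0 T, Measure.map (X t) ν ≤ C • (volume : Measure E)

/-- `b` is Borel and locally integrable on `[0,T] × ℝ^d`. -/
def BorelLocIntegrable (b : ℝ → E → E) (T : ℝ) : Prop :=
  Measurable (Function.uncurry b) ∧
  ∀ R : ℝ, IntegrableOn (Function.uncurry b) (Icc 0 T ×ˢ Metric.closedBall (0 : E) R)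

/-- The expectation `E𝛎 ∈ M₊(ℝ^d)` of a measure `𝛎` on `P(ℝ^d)`:
`∫ φ d(E𝛎) = ∫ (∫ φ dμ) d𝛎(μ)`. -/
def expectation {Ω : Type*} [MeasurableSpace Ω] (ν : Measure (ProbabilityMeasure Ω)) :
    Measure Ω :=
  ν.bind fun μ => (μ : Measure Ω)

/-- A measure `𝛎` on `P(ℝ^d)` is regular if `E𝛎 ≤ C · L^d` for some constant `C`. -/
def IsRegularOnP (ν : Measure (ProbabilityMeasure E)) : Prop :=
  ∃ C : ℝ≥0, expectation ν ≤ C • (volume : Measure E)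

/-- `M` is a `𝛎`-regular Lagrangian flow in `P(ℝ^d)` relative to `b`:
(i) for `𝛎`-a.e. `μ`, `|b| ∈ L¹_loc((0,T) × ℝ^d; μ_t dt)`, `t ↦ M t μ` is weakly continuous,
starts at `μ`, and solves the continuity equation distributionally;
(ii) `E(M(t,·)_♯ 𝛎) ≤ C · L^d` for all `t ∈ [0,T]`. -/
def IsMeasureRLF (b : ℝ → E → E) (T : ℝ) (ν : Measure (ProbabilityMeasure E))
    (M : ℝ → ProbabilityMeasure E → ProbabilityMeasure E) : Prop :=
  (∀ᵐ μ ∂ν,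
      M 0 μ = μ ∧
      (∀ R > (0:ℝ), ∀ a c : ℝ, 0 < a → c < T →
        ∫⁻ t in Icc a c,
          ∫⁻ x in Metric.closedBall (0 : E) R, ‖b t x‖₊ ∂(M t μ : Measure E) ≠ ⊤) ∧
      (∀ φ : E → ℝ, Continuous φ → HasCompactSupport φ →
        ContinuousOn (fun t => ∫ x, φ x ∂(M t μ : Measure E)) (Icc 0 T)) ∧
      SolvesContinuityEquation b T (fun t => (M t μ : Measure E))) ∧
  (∀ t ∈ Icc 0 T, AEMeasurable (M t) ν) ∧
  ∃ C : ℝ≥0, ∀ t ∈ Icc 0 T,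
    expectation (Measure.map (M t) ν) ≤ C • (volume : Measure E)


lemma rlf_ac_lipschitz_comp {F : Type*} [NormedAddCommGroup F] {γ : ℝ → F} {φ : F → ℝ}
    {K : ℝ≥0} {a c : ℝ} (hγ : AbsolutelyContinuousOnInterval γ a c) (hφ : LipschitzWith K φ) :
    AbsolutelyContinuousOnInterval (fun t => φ (γ t)) a c := by
  unfold AbsolutelyContinuousOnInterval at hγ ⊢
  refine squeeze_zero (fun _ => Finset.sum_nonneg fun _ _ => dist_nonneg) (fun E => ?_)
    (by simpa using hγ.const_mul (K : ℝ))
  rw [Finset.mul_sum]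
  exact Finset.sum_le_sum fun i _ => hφ.dist_le_mul _ _

lemma rlf_ac_primitive {F : Type*} [NormedAddCommGroup F] [NormedSpace ℝ F]
    {T : ℝ} {β : ℝ → F} (hβi : IntervalIntegrable β volume 0 T) :
    AbsolutelyContinuousOnInterval (fun t => ∫ s in (0:ℝ)..t, β s) 0 T := by
  have h0 : (0:ℝ) ∈ uIcc 0 T := left_mem_uIcc
  have hn := hβi.norm.absolutelyContinuousOnInterval_intervalIntegral h0
  unfold AbsolutelyContinuousOnInterval at hn ⊢
  refine squeeze_zero' (Eventually.of_forall fun _ => Finset.sum_nonneg fun _ _ => dist_nonneg)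
    ?_ hn
  rw [eventually_inf_principal]
  refine Eventually.of_forall fun E hE => Finset.sum_le_sum fun i hi => ?_
  obtain ⟨h1, h2⟩ := hE.1 i hi
  have i1 : IntervalIntegrable β volume 0 (E.2 i).1 := hβi.mono_set (uIcc_subset_uIcc h0 h1)
  have i2 : IntervalIntegrable β volume 0 (E.2 i).2 := hβi.mono_set (uIcc_subset_uIcc h0 h2)
  rw [dist_eq_norm, dist_eq_norm, intervalIntegral.integral_interval_sub_left i1 i2,
    intervalIntegral.integral_interval_sub_left i1.norm i2.norm]
  exact intervalIntegral.norm_integral_le_abs_integral_norm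

/-- Chain rule along an integral curve, tested in time. -/
lemma rlf_curve_identity {d : ℕ} (T : ℝ) (hT : 0 < T)
    (β γ : ℝ → EuclideanSpace ℝ (Fin d)) (x : EuclideanSpace ℝ (Fin d))
    (hβ : IntegrableOn β (Icc 0 T))
    (hγ : ∀ t ∈ Icc 0 T, γ t = x + ∫ s in (0:ℝ)..t, β s)
    (φ : EuclideanSpace ℝ (Fin d) → ℝ) (hφ : ContDiff ℝ (⊤ : ℕ∞) φ) (hφc : HasCompactSupport φ)
    (ψ : ℝ → ℝ) (hψ : ContDiff ℝ (⊤ : ℕ∞) ψ) (hψs : tsupport ψ ⊆ Ioo 0 T) :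
    ∫ t in Ioo 0 T, (deriv ψ t * φ (γ t) + ψ t * (fderiv ℝ φ (γ t)) (β t)) = 0 := by
  have hβi : IntervalIntegrable β volume 0 T := by
    rw [intervalIntegrable_iff_integrableOn_Icc_of_le hT.le]; exact hβ
  have hcomp : AbsolutelyContinuousOnInterval (fun t => ∫ s in (0:ℝ)..t, β s) 0 T :=
    rlf_ac_primitive hβi
  have hconst : AbsolutelyContinuousOnInterval (fun _ : ℝ => x) 0 T := by
    simpa [AbsolutelyContinuousOnInterval] using tendsto_const_nhds
  have hac : AbsolutelyContinuousOnInterval (fun t => x + ∫ s in (0:ℝ)..t, β s) 0 T :=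
    hconst.add hcomp
  obtain ⟨K, hK⟩ := (hφ.of_le (m := 1) (by simp)).lipschitzWith_of_hasCompactSupport hφc (by simp)
  have hacφ := rlf_ac_lipschitz_comp hac hK
  have hacψ : AbsolutelyContinuousOnInterval ψ 0 T :=
    (hψ.of_le (m := 1) (by simp)).contDiffOn.absolutelyContinuousOnInterval
  have key := hacψ.integral_deriv_mul_eq_sub hacφ
  have h0 : ψ 0 = 0 := image_eq_zero_of_notMem_tsupport fun h => by simpa using hψs h
  have h1 : ψ T = 0 := image_eq_zero_of_notMem_tsupport fun h => by simpa using hψs h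
  rw [h0, h1, intervalIntegral.integral_of_le hT.le, integral_Ioc_eq_integral_Ioo] at key
  simp only [zero_mul, sub_zero] at key
  refine Eq.trans ?_ key
  apply integral_congr_ae
  rw [EventuallyEq, ae_restrict_iff' measurableSet_Ioo]
  filter_upwards [hβi.ae_hasDerivAt_integral] with t ht htm
  have htI : t ∈ Icc 0 T := Ioo_subset_Icc_self htm
  have hd := (ht (by rwa [uIcc_of_le hT.le]) 0 (by simp)).const_add x
  have hφd : HasFDerivAt φ (fderiv ℝ φ (x + ∫ s in (0:ℝ)..t, β s)) (x + ∫ s in (0:ℝ)..t, β s) :=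
    (hφ.differentiable (by simp)).differentiableAt.hasFDerivAt
  have hc := hφd.comp_hasDerivAt t hd
  have hc' : deriv (fun t => φ (x + ∫ s in (0:ℝ)..t, β s)) t
    = (fderiv ℝ φ (x + ∫ s in (0:ℝ)..t, β s)) (β t) := hc.deriv
  rw [hc', hγ t htI]

/-- Time grid. -/
def rlfGrid (T : ℝ) (n k : ℕ) : ℝ := min ((k : ℝ) / n) T

lemma rlfGrid_mem {T : ℝ} (hT : 0 < T) (n k : ℕ) : rlfGrid T n k ∈ Icc 0 T :=
  ⟨le_min (by positivity) hT.le, min_le_right _ _⟩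

lemma rlfGrid_tendsto {T t : ℝ} (ht : t ∈ Icc 0 T) :
    Tendsto (fun n : ℕ => rlfGrid T n ⌊t * n⌋₊) atTop (𝓝[Icc 0 T] t) := by
  have h1 : Tendsto (fun n : ℕ => rlfGrid T n ⌊t * n⌋₊) atTop (𝓝 (min t T)) :=
    ((tendsto_nat_floor_mul_div_atTop ht.1).comp tendsto_natCast_atTop_atTop).min tendsto_const_nhds
  rw [min_eq_left ht.2] at h1
  refine tendsto_nhdsWithin_iff.2 ⟨h1, Eventually.of_forall fun n => ?_⟩
  exact ⟨le_min (by positivity) (ht.1.trans ht.2), min_le_right _ _⟩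

lemma rlf_curve_continuousOn {d : ℕ} {T : ℝ} (hT : 0 < T)
    {β γ : ℝ → EuclideanSpace ℝ (Fin d)} {x : EuclideanSpace ℝ (Fin d)}
    (hβ : IntegrableOn β (Icc 0 T))
    (hγ : ∀ t ∈ Icc 0 T, γ t = x + ∫ s in (0:ℝ)..t, β s) : ContinuousOn γ (Icc 0 T) := by
  have h : ContinuousOn (fun t => ∫ s in (0:ℝ)..t, β s) (uIcc 0 T) :=
    intervalIntegral.continuousOn_primitive_interval (by rwa [uIcc_of_le hT.le])
  rw [uIcc_of_le hT.le] at h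
  exact (continuousOn_const.add h).congr hγ

lemma rlf_joint_aemeasurable {d : ℕ} {T : ℝ} (hT : 0 < T)
    (m : Measure (EuclideanSpace ℝ (Fin d))) [IsFiniteMeasure m]
    (X : ℝ → EuclideanSpace ℝ (Fin d) → EuclideanSpace ℝ (Fin d))
    (hXm : ∀ t ∈ Icc 0 T, AEMeasurable (X t) m)
    (hXc : ∀ᵐ x ∂m, ContinuousOn (fun t => X t x) (Icc 0 T)) :
    AEMeasurable (fun p : ℝ × EuclideanSpace ℝ (Fin d) => X p.1 p.2)
      ((volume.restrict (Ioo 0 T)).prod m) := by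
  refine aemeasurable_of_tendsto_metrizable_ae (u := atTop)
    (f := fun n (p : ℝ × EuclideanSpace ℝ (Fin d)) => X (rlfGrid T n ⌊p.1 * n⌋₊) p.2) ?_ ?_
  · intro n
    have hk := fun k => hXm _ (rlfGrid_mem hT n k)
    have hZ : Measurable (fun q : ℕ × EuclideanSpace ℝ (Fin d) => (hk q.1).mk _ q.2) :=
      measurable_from_prod_countable_right fun k => (hk k).measurable_mk
    have hfl : Measurable (fun p : ℝ × EuclideanSpace ℝ (Fin d) => (⌊p.1 * n⌋₊, p.2)) :=
      (Nat.measurable_floor.comp (measurable_fst.mul_const _)).prodMk measurable_snd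
    refine ⟨_, hZ.comp hfl, ?_⟩
    have : ∀ᵐ x ∂m, ∀ k, X (rlfGrid T n k) x = (hk k).mk _ x := ae_all_iff.2 fun k => (hk k).ae_eq_mk
    filter_upwards [Measure.quasiMeasurePreserving_snd.ae this] with p hp
    exact hp _
  · have h1 : ∀ᵐ t ∂(volume.restrict (Ioo 0 T)), t ∈ Ioo 0 T := ae_restrict_mem measurableSet_Ioo
    filter_upwards [Measure.quasiMeasurePreserving_snd.ae hXc,
      Measure.quasiMeasurePreserving_fst.ae h1] with p hp hpt
    have hI := Ioo_subset_Icc_self hpt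
    exact (hp p.1 hI).tendsto.comp (rlfGrid_tendsto hI)

lemma rlf_mono {d : ℕ} {T : ℝ}
    {b : ℝ → EuclideanSpace ℝ (Fin d) → EuclideanSpace ℝ (Fin d)}
    {ν m : Measure (EuclideanSpace ℝ (Fin d))}
    {X : ℝ → EuclideanSpace ℝ (Fin d) → EuclideanSpace ℝ (Fin d)}
    (hX : IsRLF b T ν X) (hm : m ≤ ν) : IsRLF b T m X := by
  obtain ⟨h1, h2, C, h3⟩ := hX
  have hac := Measure.absolutelyContinuous_of_le hm
  refine ⟨hac.ae_le h1, fun t ht => (h2 t ht).mono_measure hm, C, fun t ht => ?_⟩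
  exact (Measure.map_mono_of_aemeasurable hm (h2 t ht)).trans (h3 t ht)

lemma rlf_class {d : ℕ} {T : ℝ}
    {b : ℝ → EuclideanSpace ℝ (Fin d) → EuclideanSpace ℝ (Fin d)}
    {m : Measure (EuclideanSpace ℝ (Fin d))} [IsFiniteMeasure m]
    {X : ℝ → EuclideanSpace ℝ (Fin d) → EuclideanSpace ℝ (Fin d)}
    (hX : IsRLF b T m X) : InL1LinftyClass T (fun t => Measure.map (X t) m) := by
  obtain ⟨h1, h2, C, h3⟩ := hX
  refine ⟨max (m univ).toNNReal C, fun t ht => ⟨?_, ?_⟩⟩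
  · rw [Measure.map_apply_of_aemeasurable (h2 t ht) MeasurableSet.univ, preimage_univ]
    rw [← ENNReal.coe_toNNReal (measure_ne_top m univ)]
    exact ENNReal.coe_le_coe.2 (le_max_left _ _)
  · refine (h3 t ht).trans fun s => ?_
    simp only [Measure.smul_apply, ENNReal.smul_def, smul_eq_mul]
    gcongr
    exact le_max_right _ _

lemma rlf_weak {d : ℕ} {T : ℝ} (hT : 0 < T)
    {b : ℝ → EuclideanSpace ℝ (Fin d) → EuclideanSpace ℝ (Fin d)}
    {m : Measure (EuclideanSpace ℝ (Fin d))} [IsFiniteMeasure m]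
    {X : ℝ → EuclideanSpace ℝ (Fin d) → EuclideanSpace ℝ (Fin d)}
    (hX : IsRLF b T m X) : WeaklyContinuous T (fun t => Measure.map (X t) m) := by
  obtain ⟨h1, h2, C, h3⟩ := hX
  intro φ hφ hφc
  have e : EqOn (fun t => ∫ x, φ x ∂(Measure.map (X t) m)) (fun t => ∫ x, φ (X t x) ∂m)
      (Icc 0 T) := fun t ht => integral_map (h2 t ht) hφ.aestronglyMeasurable
  refine ContinuousOn.congr ?_ e
  obtain ⟨M, hM⟩ := hφc.exists_bound_of_continuous hφ
  refine continuousOn_of_dominated (bound := fun _ => M) ?_ ?_ (integrable_const _) ?_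
  · intro t ht
    exact (hφ.measurable.comp_aemeasurable (h2 t ht)).aestronglyMeasurable
  · intro t ht
    exact Eventually.of_forall fun x => hM _
  · filter_upwards [h1] with x hx
    exact hφ.comp_continuousOn (rlf_curve_continuousOn hT hx.2.1 hx.2.2)

lemma rlf_solves {d : ℕ} {T : ℝ} (hT : 0 < T)
    {b : ℝ → EuclideanSpace ℝ (Fin d) → EuclideanSpace ℝ (Fin d)}
    (hb : BorelLocIntegrable b T)
    {m : Measure (EuclideanSpace ℝ (Fin d))} [IsFiniteMeasure m]
    {X : ℝ → EuclideanSpace ℝ (Fin d) → EuclideanSpace ℝ (Fin d)}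
    (hX : IsRLF b T m X) : SolvesContinuityEquation b T (fun t => Measure.map (X t) m) := by
  obtain ⟨h1, h2, C, h3⟩ := hX
  intro φ hφ hφc ψ hψ hψc hψs
  have hXc : ∀ᵐ x ∂m, ContinuousOn (fun t => X t x) (Icc 0 T) :=
    h1.mono fun x hx => rlf_curve_continuousOn hT hx.2.1 hx.2.2
  have hXj := rlf_joint_aemeasurable hT m X h2 hXc
  have hDc : Continuous (fderiv ℝ φ) := hφ.continuous_fderiv (by simp)
  have hDcs : HasCompactSupport (fderiv ℝ φ) := hφc.fderiv (𝕜 := ℝ)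
  obtain ⟨M, hM⟩ := hφc.exists_bound_of_continuous hφ.continuous
  obtain ⟨M', hM'⟩ := hDcs.exists_bound_of_continuous hDc
  have hψ' : Continuous (deriv ψ) := hψ.continuous_deriv (by simp)
  obtain ⟨P, hP⟩ := hψc.exists_bound_of_continuous hψ.continuous
  obtain ⟨P', hP'⟩ := (hψc.deriv).exists_bound_of_continuous hψ'
  -- the vector-field term as a function on spacetime
  have hGm : Measurable (fun p : ℝ × EuclideanSpace ℝ (Fin d) => (fderiv ℝ φ p.2) (b p.1 p.2)) := by
    have hev : Continuous (fun q : (EuclideanSpace ℝ (Fin d) →L[ℝ] ℝ) × EuclideanSpace ℝ (Fin d)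
      => q.1 q.2) := by fun_prop
    exact hev.measurable.comp ((hDc.measurable.comp measurable_snd).prodMk hb.1)
  have hGint : ∫⁻ t in Ioo 0 T, ∫⁻ x, ‖(fderiv ℝ φ x) (b t x)‖ₑ < ⊤ := by
    obtain ⟨R, hR⟩ := hDcs.isCompact.isBounded.subset_closedBall (0 : EuclideanSpace ℝ (Fin d))
    have hbR := (hb.2 R).2
    have hbT : ∫⁻ t in Icc 0 T, ∫⁻ x in closedBall (0 : EuclideanSpace ℝ (Fin d)) R, ‖b t x‖ₑ < ⊤ := by
      rw [HasFiniteIntegral, Measure.volume_eq_prod, ← Measure.prod_restrict,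
        lintegral_prod _ hb.1.enorm.aemeasurable] at hbR
      exact hbR
    calc ∫⁻ t in Ioo 0 T, ∫⁻ x, ‖(fderiv ℝ φ x) (b t x)‖ₑ
        ≤ ∫⁻ t in Ioo 0 T, ∫⁻ x in closedBall (0 : EuclideanSpace ℝ (Fin d)) R,
            ENNReal.ofReal M' * ‖b t x‖ₑ := by
          refine lintegral_mono fun t => ?_
          rw [← lintegral_indicator measurableSet_closedBall]
          refine lintegral_mono fun x => ?_
          by_cases hx : x ∈ closedBall (0 : EuclideanSpace ℝ (Fin d)) R
          · rw [indicator_of_mem hx]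
            refine ((fderiv ℝ φ x).le_opENorm _).trans ?_
            gcongr
            rw [← ofReal_norm]
            exact ENNReal.ofReal_le_ofReal (hM' x)
          · have : fderiv ℝ φ x = 0 := image_eq_zero_of_notMem_tsupport fun h => hx (hR h)
            simp [this]
      _ ≤ ∫⁻ t in Icc 0 T, ∫⁻ x in closedBall (0 : EuclideanSpace ℝ (Fin d)) R,
            ENNReal.ofReal M' * ‖b t x‖ₑ := lintegral_mono_set Ioo_subset_Icc_self
      _ = ENNReal.ofReal M' * ∫⁻ t in Icc 0 T,
            ∫⁻ x in closedBall (0 : EuclideanSpace ℝ (Fin d)) R, ‖b t x‖ₑ := by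
          rw [← lintegral_const_mul' _ _ ENNReal.ofReal_ne_top]
          simp_rw [lintegral_const_mul' _ _ ENNReal.ofReal_ne_top]
      _ < ⊤ := ENNReal.mul_lt_top ENNReal.ofReal_lt_top hbT
  have hpair : AEMeasurable (fun p : ℝ × EuclideanSpace ℝ (Fin d) => (p.1, X p.1 p.2))
      ((volume.restrict (Ioo 0 T)).prod m) := measurable_fst.aemeasurable.prodMk hXj
  have hGX : AEMeasurable (fun p : ℝ × EuclideanSpace ℝ (Fin d) =>
      (fderiv ℝ φ (X p.1 p.2)) (b p.1 (X p.1 p.2))) ((volume.restrict (Ioo 0 T)).prod m) :=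
    hGm.comp_aemeasurable hpair
  have hGXi : Integrable (fun p : ℝ × EuclideanSpace ℝ (Fin d) =>
      (fderiv ℝ φ (X p.1 p.2)) (b p.1 (X p.1 p.2))) ((volume.restrict (Ioo 0 T)).prod m) := by
    refine ⟨hGX.aestronglyMeasurable, ?_⟩
    rw [HasFiniteIntegral, lintegral_prod _ hGX.enorm]
    calc ∫⁻ t in Ioo 0 T, ∫⁻ x, ‖(fderiv ℝ φ (X t x)) (b t (X t x))‖ₑ ∂m
        ≤ ∫⁻ t in Ioo 0 T, (C : ℝ≥0∞) * ∫⁻ x, ‖(fderiv ℝ φ x) (b t x)‖ₑ := by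
          refine setLIntegral_mono' measurableSet_Ioo fun t ht => ?_
          have hI := Ioo_subset_Icc_self ht
          have hmt : Measurable (fun x => ‖(fderiv ℝ φ x) (b t x)‖ₑ) :=
            (hGm.comp (measurable_const.prodMk measurable_id)).enorm
          rw [← lintegral_map' hmt.aemeasurable (h2 t hI)]
          refine (lintegral_mono' (h3 t hI) le_rfl).trans ?_
          rw [lintegral_smul_measure]
          rfl
      _ = (C : ℝ≥0∞) * ∫⁻ t in Ioo 0 T, ∫⁻ x, ‖(fderiv ℝ φ x) (b t x)‖ₑ :=
          lintegral_const_mul' _ _ ENNReal.coe_ne_top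
      _ < ⊤ := ENNReal.mul_lt_top ENNReal.coe_lt_top hGint
  have hI2 : Integrable (fun p : ℝ × EuclideanSpace ℝ (Fin d) =>
      ψ p.1 * (fderiv ℝ φ (X p.1 p.2)) (b p.1 (X p.1 p.2)))
      ((volume.restrict (Ioo 0 T)).prod m) :=
    hGXi.bdd_mul (c := P) (hψ.continuous.comp continuous_fst).aestronglyMeasurable
      (Eventually.of_forall fun p => hP _)
  have hI1' : Integrable (fun p : ℝ × EuclideanSpace ℝ (Fin d) => φ (X p.1 p.2))
      ((volume.restrict (Ioo 0 T)).prod m) :=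
    Integrable.of_bound (hφ.continuous.measurable.comp_aemeasurable hXj).aestronglyMeasurable M
      (Eventually.of_forall fun p => hM _)
  have hI1 : Integrable (fun p : ℝ × EuclideanSpace ℝ (Fin d) => deriv ψ p.1 * φ (X p.1 p.2))
      ((volume.restrict (Ioo 0 T)).prod m) :=
    hI1'.bdd_mul (c := P') (hψ'.comp continuous_fst).aestronglyMeasurable
      (Eventually.of_forall fun p => hP' _)
  have hsum := hI1.add hI2
  have step : ∫ t in Ioo 0 T, (deriv ψ t * ∫ x, φ x ∂(Measure.map (X t) m) +
        ψ t * ∫ x, (fderiv ℝ φ x) (b t x) ∂(Measure.map (X t) m)) =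
      ∫ t in Ioo 0 T, ∫ x, (deriv ψ t * φ (X t x) +
        ψ t * (fderiv ℝ φ (X t x)) (b t (X t x))) ∂m := by
    apply integral_congr_ae
    filter_upwards [hI1.prod_right_ae, hI2.prod_right_ae, ae_restrict_mem measurableSet_Ioo]
      with t ha hc ht
    have hI := Ioo_subset_Icc_self ht
    have hmt : Measurable (fun x => (fderiv ℝ φ x) (b t x)) :=
      hGm.comp (measurable_const.prodMk measurable_id)
    rw [integral_map (h2 t hI) hφ.continuous.aestronglyMeasurable,
      integral_map (h2 t hI) hmt.aestronglyMeasurable, integral_add ha hc,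
      integral_const_mul, integral_const_mul]
  rw [step, integral_integral_swap (f := fun t x => deriv ψ t * φ (X t x) +
        ψ t * (fderiv ℝ φ (X t x)) (b t (X t x))) hsum]
  apply integral_eq_zero_of_ae
  filter_upwards [h1] with x hx
  exact rlf_curve_identity T hT (fun s => b s (X s x)) (fun s => X s x) x hx.2.1 hx.2.2
    φ hφ hφc ψ hψ hψs

/-- Two maps whose push-forwards of all restrictions agree coincide a.e. -/
lemma rlf_ae_eq_of_map_restrict {d : ℕ} {κ : Measure (EuclideanSpace ℝ (Fin d))}
    {U V : EuclideanSpace ℝ (Fin d) → EuclideanSpace ℝ (Fin d)}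
    (hU : AEMeasurable U κ) (hV : AEMeasurable V κ)
    (h : ∀ A, MeasurableSet A → Measure.map U (κ.restrict A) = Measure.map V (κ.restrict A)) :
    U =ᵐ[κ] V := by
  have main : ∀ {U V : EuclideanSpace ℝ (Fin d) → EuclideanSpace ℝ (Fin d)},
      AEMeasurable U κ → AEMeasurable V κ →
      (∀ A, MeasurableSet A → Measure.map U (κ.restrict A) = Measure.map V (κ.restrict A)) →
      ∀ B, MeasurableSet B → ∀ᵐ x ∂κ, U x ∈ B → V x ∈ B := by
    intro U V hU hV h B hB
    have hA : MeasurableSet (hU.mk U ⁻¹' B) := hU.measurable_mk hB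
    have e := congrArg (fun μ => μ Bᶜ) (h _ hA)
    beta_reduce at e
    rw [Measure.map_apply_of_aemeasurable hU.restrict hB.compl,
      Measure.map_apply_of_aemeasurable hV.restrict hB.compl] at e
    have hz : ∀ᵐ x ∂(κ.restrict (hU.mk U ⁻¹' B)), U x ∈ B := by
      filter_upwards [ae_restrict_mem hA, ae_restrict_of_ae hU.ae_eq_mk] with x hx hx2
      rw [hx2]; exact hx
    have hz0 : (κ.restrict (hU.mk U ⁻¹' B)) (U ⁻¹' Bᶜ) = 0 := hz
    rw [hz0] at e
    have hv : ∀ᵐ x ∂(κ.restrict (hU.mk U ⁻¹' B)), V x ∈ B := e.symm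
    rw [ae_restrict_iff' hA] at hv
    filter_upwards [hv, hU.ae_eq_mk] with x hx hx2 hxB
    exact hx (by rw [mem_preimage, ← hx2]; exact hxB)
  refine Filter.EventuallyEq.of_forall_separating_preimage MeasurableSet fun B hB => ?_
  filter_upwards [main hU hV h B hB, main hV hU (fun A hA => (h A hA).symm) B hB] with x h1 h2
  exact propext ⟨h1, h2⟩

/-- Uniqueness of the `ν`-RLF in `ℝ^d` in the strong sense.
If the continuity equation has uniqueness in `L∞₊([0,T]; L¹ ∩ L∞)`, `f, g ∈ L¹ ∩ L∞` are
nonnegative, `X` is an `(f·L^d)`-RLF and `Y` a `(g·L^d)`-RLF relative to `b`, then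
`X(·,x) = Y(·,x)` on `[0,T]` for `L^d`-a.e. `x ∈ {f > 0} ∩ {g > 0}`. -/
theorem uniqueness_of_nu_RLF {d : ℕ} (T : ℝ) (hT : 0 < T)
    (b : ℝ → EuclideanSpace ℝ (Fin d) → EuclideanSpace ℝ (Fin d))
    (hb : BorelLocIntegrable b T)
    (huniq : CEUniqueness b T)
    (f g : EuclideanSpace ℝ (Fin d) → ℝ)
    (hf_int : Integrable f) (hf_nonneg : ∀ x, 0 ≤ f x)
    (hf_bdd : ∃ C : ℝ, ∀ᵐ x ∂(volume : Measure (EuclideanSpace ℝ (Fin d))), f x ≤ C)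
    (hg_int : Integrable g) (hg_nonneg : ∀ x, 0 ≤ g x)
    (hg_bdd : ∃ C : ℝ, ∀ᵐ x ∂(volume : Measure (EuclideanSpace ℝ (Fin d))), g x ≤ C)
    (X Y : ℝ → EuclideanSpace ℝ (Fin d) → EuclideanSpace ℝ (Fin d))
    (hX : IsRLF b T ((volume : Measure (EuclideanSpace ℝ (Fin d))).withDensity
            (fun x => ENNReal.ofReal (f x))) X)
    (hY : IsRLF b T ((volume : Measure (EuclideanSpace ℝ (Fin d))).withDensity
            (fun x => ENNReal.ofReal (g x))) Y) :
    ∀ᵐ x ∂(volume : Measure (EuclideanSpace ℝ (Fin d))),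
      (0 < f x ∧ 0 < g x) → ∀ t ∈ Icc 0 T, X t x = Y t x := by
  set κ : Measure (EuclideanSpace ℝ (Fin d)) :=
    volume.withDensity (fun x => ENNReal.ofReal (min (f x) (g x))) with hκ
  have hmin : AEMeasurable (fun x => ENNReal.ofReal (min (f x) (g x))) volume :=
    (hf_int.aemeasurable.min hg_int.aemeasurable).ennreal_ofReal
  have hκf : κ ≤ volume.withDensity (fun x => ENNReal.ofReal (f x)) :=
    withDensity_mono (Eventually.of_forall fun x => ENNReal.ofReal_le_ofReal (min_le_left _ _))
  have hκg : κ ≤ volume.withDensity (fun x => ENNReal.ofReal (g x)) :=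
    withDensity_mono (Eventually.of_forall fun x => ENNReal.ofReal_le_ofReal (min_le_right _ _))
  haveI : IsFiniteMeasure κ := isFiniteMeasure_withDensity_ofReal (hf_int.inf hg_int).2
  have hXκ := rlf_mono hX hκf
  have hYκ := rlf_mono hY hκg
  have hmap : ∀ t ∈ Icc 0 T, X t =ᵐ[κ] Y t := by
    intro t ht
    refine rlf_ae_eq_of_map_restrict (hXκ.2.1 t ht) (hYκ.2.1 t ht) fun A hA => ?_
    have hXA := rlf_mono hXκ (Measure.restrict_le_self (s := A))
    have hYA := rlf_mono hYκ (Measure.restrict_le_self (s := A))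
    refine huniq _ _ (rlf_class hXA) (rlf_class hYA) (rlf_weak hT hXA) (rlf_weak hT hYA)
      (rlf_solves hT hb hXA) (rlf_solves hT hb hYA) ?_ t ht
    apply Measure.map_congr
    filter_upwards [hXA.1, hYA.1] with x hx hy
    rw [hx.1, hy.1]
  have hall : ∀ᵐ x ∂κ, ∀ n k : ℕ, X (rlfGrid T n k) x = Y (rlfGrid T n k) x :=
    ae_all_iff.2 fun n => ae_all_iff.2 fun k => hmap _ (rlfGrid_mem hT n k)
  have hfin : ∀ᵐ x ∂κ, ∀ t ∈ Icc 0 T, X t x = Y t x := by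
    filter_upwards [hall, hXκ.1, hYκ.1] with x hx h1 h2 t ht
    have c1 := (rlf_curve_continuousOn hT h1.2.1 h1.2.2 t ht).tendsto.comp (rlfGrid_tendsto ht)
    have c2 := (rlf_curve_continuousOn hT h2.2.1 h2.2.2 t ht).tendsto.comp (rlfGrid_tendsto ht)
    refine tendsto_nhds_unique c1 (c2.congr fun n => ?_)
    exact (hx _ _).symm
  rw [hκ, ae_withDensity_iff' hmin] at hfin
  filter_upwards [hfin] with x hx hpos
  exact hx (ENNReal.ofReal_pos.2 (lt_min hpos.1 hpos.2)).ne'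

end
end

section
/- Assume that the continuity equation d/dt w_t + ∇·(b_t w_t) = 0 has uniqueness in L∞₊([0,T]; L¹(ℝ^d) ∩ L∞(ℝ^d)). Then for every regular nonnegative σ-finite measure 𝛎 on P(ℝ^d) there exists at most one 𝛎-regular Lagrangian flow in P(ℝ^d) relative to b: if 𝛍¹ and 𝛍² are both 𝛎-RLFs in P(ℝ^d), then for 𝛎-a.e. μ one has 𝛍¹(t,μ) = 𝛍²(t,μ) for all t ∈ [0,T]. -/
open MeasureTheory Set Filter Metric Function
open scoped ENNReal NNReal Topology

noncomputable section

variable {E : Type*} [NormedAddCommGroup E] [NormedSpace ℝ E] [MeasureSpace E]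

section helpers
open ProbabilityTheory

/-- A family of probability measures is measurable as soon as integrals of compactly supported
continuous functions are. -/
theorem measurable_of_cc {d : ℕ} {α : Type*} [MeasurableSpace α]
    (κ : α → Measure (EuclideanSpace ℝ (Fin d))) [∀ a, IsProbabilityMeasure (κ a)]
    (h : ∀ φ : EuclideanSpace ℝ (Fin d) → ℝ, Continuous φ → HasCompactSupport φ →
      Measurable fun a => ∫ x, φ x ∂(κ a)) : Measurable κ := by
  have hK : ∀ K : Set (EuclideanSpace ℝ (Fin d)), IsCompact K → Measurable fun a => κ a K := by
    intro K hK
    have hpos : ∀ n : ℕ, (0:ℝ) < 1 / ((n:ℝ) + 1) := fun n => Nat.one_div_pos_of_nat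
    refine measurable_of_tendsto_metrizable (f := fun (n : ℕ) a =>
      ∫⁻ x, (thickenedIndicator (hpos n) K x : ℝ≥0∞) ∂(κ a)) ?_ ?_
    · intro n
      have hc : Continuous fun x => ((thickenedIndicator (hpos n) K x : ℝ≥0) : ℝ) :=
        NNReal.continuous_coe.comp (thickenedIndicator (hpos n) K).continuous
      have hs : HasCompactSupport fun x => ((thickenedIndicator (hpos n) K x : ℝ≥0) : ℝ) := by
        refine HasCompactSupport.intro (hK.cthickening (r := 1 / ((n:ℝ) + 1))) fun x hx => ?_
        rw [thickenedIndicator_zero (hpos n) K]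
        · rfl
        · exact fun h' => hx (thickening_subset_cthickening _ _ h')
      have := (h _ hc hs).ennreal_ofReal
      convert this using 2 with a
      rw [ofReal_integral_eq_lintegral_ofReal]
      · simp
      · exact hc.integrable_of_hasCompactSupport hs
      · exact Eventually.of_forall fun x => NNReal.coe_nonneg _
    · rw [tendsto_pi_nhds]
      intro a
      exact tendsto_lintegral_thickenedIndicator_of_isClosed (κ a) hK.isClosed hpos
        tendsto_one_div_add_atTop_nhds_zero_nat
  refine Measurable.measure_of_isPiSystem_of_isProbabilityMeasure (S := {s | IsClosed s}) ?_
    (isPiSystem_isClosed) ?_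
  · rw [BorelSpace.measurable_eq (α := EuclideanSpace ℝ (Fin d)), borel_eq_generateFrom_isClosed]
  · intro F hF
    have hF : IsClosed F := hF
    refine measurable_of_tendsto_metrizable (f := fun (n : ℕ) a =>
      κ a (F ∩ closedBall 0 n)) (fun n => hK _ ((isCompact_closedBall _ _).inter_left hF)) ?_
    rw [tendsto_pi_nhds]
    intro a
    have : F = ⋃ n : ℕ, F ∩ closedBall 0 n := by
      rw [← inter_iUnion, iUnion_closedBall_nat, inter_univ]
    conv => enter [3, 1]; rw [this]
    refine tendsto_measure_iUnion_atTop fun m n hmn => ?_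
    exact inter_subset_inter_right _ (closedBall_subset_closedBall (by exact_mod_cast hmn))

theorem eq_of_cc {d : ℕ} (μ ν : Measure (EuclideanSpace ℝ (Fin d))) [IsProbabilityMeasure μ]
    [IsProbabilityMeasure ν]
    (h : ∀ φ : EuclideanSpace ℝ (Fin d) → ℝ, Continuous φ → HasCompactSupport φ →
      ∫ x, φ x ∂μ = ∫ x, φ x ∂ν) : μ = ν :=
  Measure.ext_of_integral_eq_on_compactlySupported fun f =>
    h f f.continuous f.hasCompactSupport

/-- A genuinely measurable version of a regular flow in `P(ℝ^d)`. -/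
structure Pkg {d : ℕ} {Ω : Type*} [MeasurableSpace Ω]
    (b : ℝ → EuclideanSpace ℝ (Fin d) → EuclideanSpace ℝ (Fin d)) (T : ℝ)
    (ν : Measure Ω) (m : ℝ → Ω → Measure (EuclideanSpace ℝ (Fin d))) : Prop where
  prob : ∀ t ω, IsProbabilityMeasure (m t ω)
  meas : Measurable (Function.uncurry m)
  cont : ∀ ω, ∀ φ : EuclideanSpace ℝ (Fin d) → ℝ, Continuous φ → HasCompactSupport φ →
    Continuous fun t => ∫ x, φ x ∂(m t ω)
  ce : ∀ᵐ ω ∂ν, SolvesContinuityEquation b T (fun t => m t ω)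
  bd : ∃ C : ℝ≥0, ∀ t ∈ Icc 0 T, ν.bind (m t) ≤ C • (volume : Measure (EuclideanSpace ℝ (Fin d)))

variable {d : ℕ} {Ω : Type*} [MeasurableSpace Ω]
    {b : ℝ → EuclideanSpace ℝ (Fin d) → EuclideanSpace ℝ (Fin d)} {T : ℝ}
    {ν : Measure Ω} {m : ℝ → Ω → Measure (EuclideanSpace ℝ (Fin d))}

theorem Pkg.meas_t (h : Pkg b T ν m) (t : ℝ) : Measurable (m t) :=
  h.meas.comp measurable_prodMk_left

/-- Fubini for the averaged curve. -/
theorem fubini_avg (ρ : Measure Ω) [IsFiniteMeasure ρ] (h : Pkg b T ρ m)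
    (F : ℝ → EuclideanSpace ℝ (Fin d) → ℝ) (hF : Measurable (Function.uncurry F))
    (hi : Integrable (Function.uncurry F) ((volume.restrict (Ioo 0 T)).prod volume)) :
    Integrable (fun t => ∫ x, F t x ∂(ρ.bind (m t))) (volume.restrict (Ioo 0 T)) ∧
    (∀ᵐ ω ∂ρ, Integrable (fun t => ∫ x, F t x ∂(m t ω)) (volume.restrict (Ioo 0 T))) ∧
    Integrable (fun ω => ∫ t in Ioo 0 T, ∫ x, F t x ∂(m t ω)) ρ ∧
    ∫ t in Ioo 0 T, ∫ x, F t x ∂(ρ.bind (m t)) =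
      ∫ ω, (∫ t in Ioo 0 T, ∫ x, F t x ∂(m t ω)) ∂ρ := by
  have := h.prob
  obtain ⟨C, hC⟩ := h.bd
  set τ := (volume.restrict (Ioo 0 T) : Measure ℝ) with hτ
  let κ : Kernel (ℝ × Ω) (EuclideanSpace ℝ (Fin d)) := ⟨Function.uncurry m, h.meas⟩
  have hκ : ∀ p, κ p = m p.1 p.2 := fun p => rfl
  have : IsMarkovKernel κ := ⟨fun p => h.prob p.1 p.2⟩
  have hF' : Measurable (fun q : (ℝ × Ω) × EuclideanSpace ℝ (Fin d) => F q.1.1 q.2) :=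
    hF.comp ((measurable_fst.comp measurable_fst).prodMk measurable_snd)
  have htau : ∀ᵐ t ∂τ, t ∈ Icc 0 T := by
    filter_upwards [ae_restrict_mem measurableSet_Ioo] with t ht using Ioo_subset_Icc_self ht
  have hint : Integrable (fun q : (ℝ × Ω) × EuclideanSpace ℝ (Fin d) => F q.1.1 q.2)
      ((τ.prod ρ) ⊗ₘ κ) := by
    refine ⟨hF'.aestronglyMeasurable, ?_⟩
    rw [HasFiniteIntegral, Measure.lintegral_compProd (by fun_prop)]
    rw [lintegral_prod _ (Measurable.aemeasurable (by
      exact Measurable.lintegral_kernel_prod_right' (f := fun q : (ℝ × Ω) × EuclideanSpace ℝ (Fin d) => ‖F q.1.1 q.2‖ₑ) hF'.enorm))]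
    calc ∫⁻ t, ∫⁻ ω, ∫⁻ x, ‖F t x‖ₑ ∂(κ (t, ω)) ∂ρ ∂τ
        ≤ ∫⁻ t, (C * ∫⁻ x, ‖F t x‖ₑ) ∂τ := by
          refine lintegral_mono_ae ?_
          filter_upwards [htau] with t ht
          have hm : Measurable fun x => ‖F t x‖ₑ := (hF.comp measurable_prodMk_left).enorm
          calc _ = ∫⁻ x, ‖F t x‖ₑ ∂(ρ.bind (m t)) := by
                rw [Measure.lintegral_bind (h.meas_t t).aemeasurable hm.aemeasurable]; rfl
            _ ≤ ∫⁻ x, ‖F t x‖ₑ ∂(C • volume) := lintegral_mono' (hC t ht) le_rfl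
            _ = _ := by rw [lintegral_smul_measure]; rfl
      _ = C * ∫⁻ t, (∫⁻ x, ‖F t x‖ₑ) ∂τ := by
          rw [lintegral_const_mul]
          exact Measurable.lintegral_prod_right' (f := fun q : ℝ × EuclideanSpace ℝ (Fin d) => ‖F q.1 q.2‖ₑ) hF.enorm
      _ = C * ∫⁻ q, ‖Function.uncurry F q‖ₑ ∂(τ.prod volume) := by
          rw [lintegral_prod _ hF.enorm.aemeasurable]; rfl
      _ < ∞ := ENNReal.mul_lt_top ENNReal.coe_lt_top hi.2
  have hG : Integrable (fun p : ℝ × Ω => ∫ x, F p.1 x ∂(m p.1 p.2)) (τ.prod ρ) := by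
    have h2 := (Measure.integrable_compProd_iff hint.1).1 hint
    refine h2.2.mono ?_ ?_
    · exact (StronglyMeasurable.integral_kernel_prod_right' (κ := κ) hF'.stronglyMeasurable).aestronglyMeasurable
    · refine Eventually.of_forall fun p => ?_
      refine (norm_integral_le_integral_norm _).trans ?_
      exact le_abs_self _
  have hae : ∀ᵐ t ∂τ, ∫ x, F t x ∂(ρ.bind (m t)) = ∫ ω, ∫ x, F t x ∂(m t ω) ∂ρ := by
    filter_upwards [htau, hi.prod_right_ae] with t ht hit
    let κt : Kernel Ω (EuclideanSpace ℝ (Fin d)) := ⟨m t, h.meas_t t⟩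
    have hI : Integrable (F t) (ρ.bind κt) :=
      Integrable.mono_measure (hit.smul_measure_nnreal (c := C)) (hC t ht)
    have h3 := Measure.comp_eq_comp_const_apply (κ := κt) (μ := ρ)
    have hI' := hI
    rw [h3] at hI'
    have h4 := Kernel.integral_comp hI'
    rw [← h3] at h4
    exact h4
  refine ⟨?_, ?_, ?_, ?_⟩
  · exact (hG.integral_prod_left).congr (hae.mono fun t ht => ht.symm)
  · exact hG.prod_left_ae
  · exact hG.integral_prod_right
  · rw [integral_congr_ae hae]
    exact integral_integral_swap (f := fun t ω => ∫ x, F t x ∂(m t ω)) hG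


theorem integral_bind_avg (ρ : Measure Ω) (k : Ω → Measure (EuclideanSpace ℝ (Fin d)))
    (hk : Measurable k) (f : EuclideanSpace ℝ (Fin d) → ℝ) (hI : Integrable f (ρ.bind k)) :
    ∫ x, f x ∂(ρ.bind k) = ∫ ω, ∫ x, f x ∂(k ω) ∂ρ := by
  let κt : Kernel Ω (EuclideanSpace ℝ (Fin d)) := ⟨k, hk⟩
  have h3 := Measure.comp_eq_comp_const_apply (κ := κt) (μ := ρ)
  have hI' : Integrable f (ρ.bind κt) := hI
  rw [h3] at hI'
  have h4 := Kernel.integral_comp hI'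
  rw [← h3] at h4
  exact h4

theorem measurable_integral_family {α : Type*} [MeasurableSpace α]
    (k : α → Measure (EuclideanSpace ℝ (Fin d))) [∀ a, IsProbabilityMeasure (k a)]
    (hk : Measurable k) (f : EuclideanSpace ℝ (Fin d) → ℝ) (hf : Measurable f) :
    Measurable fun a => ∫ x, f x ∂(k a) := by
  let κ : Kernel α (EuclideanSpace ℝ (Fin d)) := ⟨k, hk⟩
  have : IsMarkovKernel κ := ⟨fun p => inferInstanceAs (IsProbabilityMeasure (k p))⟩
  exact (StronglyMeasurable.integral_kernel (κ := κ) hf.stronglyMeasurable).measurable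

theorem Pkg.restrict (h : Pkg b T ν m) (A : Set Ω) : Pkg b T (ν.restrict A) m where
  prob := h.prob
  meas := h.meas
  cont := h.cont
  ce := ae_restrict_of_ae h.ce
  bd := by
    obtain ⟨C, hC⟩ := h.bd
    refine ⟨C, fun t ht => le_trans ?_ (hC t ht)⟩
    refine Measure.le_iff.2 fun s hs => ?_
    rw [Measure.bind_apply hs (h.meas_t t).aemeasurable,
      Measure.bind_apply hs (h.meas_t t).aemeasurable]
    exact lintegral_mono' Measure.restrict_le_self le_rfl

theorem avg_class (ρ : Measure Ω) [IsFiniteMeasure ρ] (h : Pkg b T ρ m) :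
    InL1LinftyClass T (fun t => ρ.bind (m t)) := by
  have := h.prob
  obtain ⟨C, hC⟩ := h.bd
  refine ⟨max C (ρ univ).toNNReal, fun t ht => ⟨?_, (hC t ht).trans ?_⟩⟩
  · rw [Measure.bind_apply .univ (h.meas_t t).aemeasurable]
    simp only [measure_univ, lintegral_const, one_mul]
    rw [ENNReal.coe_max, ENNReal.coe_toNNReal (measure_ne_top _ _)]
    exact le_max_right _ _
  · refine Measure.le_iff.2 fun s hs => ?_
    simp only [Measure.smul_apply]
    exact mul_le_mul_left (ENNReal.coe_le_coe.2 (le_max_left C _)) _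

theorem avg_finite (ρ : Measure Ω) [IsFiniteMeasure ρ] (h : Pkg b T ρ m) (t : ℝ) :
    IsFiniteMeasure (ρ.bind (m t)) := by
  have := h.prob
  constructor
  rw [Measure.bind_apply .univ (h.meas_t t).aemeasurable]
  simp

theorem avg_cont (ρ : Measure Ω) [IsFiniteMeasure ρ] (h : Pkg b T ρ m) :
    WeaklyContinuous T (fun t => ρ.bind (m t)) := by
  have := h.prob
  intro φ hφ hs
  obtain ⟨K, hK⟩ := hφ.bounded_above_of_compact_support hs
  have heq : ∀ t, ∫ x, φ x ∂(ρ.bind (m t)) = ∫ ω, ∫ x, φ x ∂(m t ω) ∂ρ := fun t => by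
    have := avg_finite ρ h t
    exact integral_bind_avg ρ (m t) (h.meas_t t) φ (hφ.integrable_of_hasCompactSupport hs)
  simp only [heq]
  refine continuousOn_of_dominated (bound := fun _ => K) ?_ ?_ (integrable_const _) ?_
  · intro t _
    exact (measurable_integral_family _ (h.meas_t t) φ hφ.measurable).aestronglyMeasurable
  · intro t _
    refine Eventually.of_forall fun ω => ?_
    simpa using norm_integral_le_of_norm_le_const (μ := m t ω) (Eventually.of_forall hK)
  · exact Eventually.of_forall fun ω => (h.cont ω φ hφ hs).continuousOn

theorem avg_solves (hb : BorelLocIntegrable b T) (ρ : Measure Ω) [IsFiniteMeasure ρ]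
    (h : Pkg b T ρ m) : SolvesContinuityEquation b T (fun t => ρ.bind (m t)) := by
  intro φ hφ hφs ψ hψ hψs hψT
  obtain ⟨hbm, hbi⟩ := hb
  have hdψ : Continuous (deriv ψ) := hψ.continuous_deriv (by simp)
  have hdφ : Continuous (fderiv ℝ φ) := hφ.continuous_fderiv (by simp)
  obtain ⟨K1, hK1⟩ := hdφ.bounded_above_of_compact_support (hφs.fderiv ℝ)
  obtain ⟨K2, hK2⟩ := hψ.continuous.bounded_above_of_compact_support hψs
  have hK2' : 0 ≤ K2 := (norm_nonneg _).trans (hK2 0)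
  obtain ⟨R, hR⟩ := (hφs.fderiv ℝ).isCompact.isBounded.subset_closedBall 0
  have m1 : Measurable (Function.uncurry fun t x => deriv ψ t * φ x) :=
    (hdψ.measurable.comp measurable_fst).mul (hφ.continuous.measurable.comp measurable_snd)
  have m2 : Measurable (Function.uncurry fun t x => ψ t * (fderiv ℝ φ x) (b t x)) := by
    refine (hψ.continuous.measurable.comp measurable_fst).mul ?_
    have hc : Continuous fun q : (EuclideanSpace ℝ (Fin d) →L[ℝ] ℝ) × EuclideanSpace ℝ (Fin d) =>
      q.1 q.2 := by fun_prop
    exact hc.measurable.comp ((hdφ.measurable.comp measurable_snd).prodMk hbm)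
  have i1 : Integrable (Function.uncurry fun t x => deriv ψ t * φ x)
      (((volume : Measure ℝ).restrict (Ioo 0 T)).prod volume) := by
    refine Integrable.mul_prod ?_ (hφ.continuous.integrable_of_hasCompactSupport hφs)
    exact (hdψ.integrable_of_hasCompactSupport hψs.deriv).integrableOn
  have ib : Integrable ((univ ×ˢ closedBall 0 R).indicator (Function.uncurry b))
      (((volume : Measure ℝ).restrict (Ioo 0 T)).prod volume) := by
    rw [integrable_indicator_iff (MeasurableSet.univ.prod measurableSet_closedBall), IntegrableOn,
      ← Measure.prod_restrict, Measure.restrict_univ, Measure.prod_restrict]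
    exact (hbi R).mono_set (prod_mono Ioo_subset_Icc_self le_rfl)
  have i2 : Integrable (Function.uncurry fun t x => ψ t * (fderiv ℝ φ x) (b t x))
      (((volume : Measure ℝ).restrict (Ioo 0 T)).prod volume) := by
    refine (ib.norm.const_mul (K2 * K1)).mono' m2.aestronglyMeasurable ?_
    refine Eventually.of_forall fun ⟨t, x⟩ => ?_
    by_cases hx : x ∈ closedBall (0 : EuclideanSpace ℝ (Fin d)) R
    · rw [indicator_of_mem (by simpa using hx)]
      simp only [Function.uncurry_apply_pair, norm_mul, mul_assoc]
      refine mul_le_mul (hK2 t) ?_ (norm_nonneg _) hK2'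
      exact ((fderiv ℝ φ x).le_opNorm _).trans (by gcongr; exact hK1 x)
    · have : fderiv ℝ φ x = 0 := image_eq_zero_of_notMem_tsupport fun h' => hx (hR h')
      rw [indicator_of_notMem (by simpa using hx)]
      simp [this]
  obtain ⟨a1, a2, a3, a4⟩ := fubini_avg ρ h _ m1 i1
  obtain ⟨c1, c2, c3, c4⟩ := fubini_avg ρ h _ m2 i2
  simp only [← integral_const_mul]
  rw [integral_add a1 c1, a4, c4, ← integral_add a3 c3]
  refine integral_eq_zero_of_ae ?_
  filter_upwards [h.ce, a2, c2] with ω h1 h2 h3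
  rw [← integral_add h2 h3]
  have := h1 φ hφ hφs ψ hψ hψs hψT
  simp only [← integral_const_mul] at this
  exact this

/-- Two measurable flows agree almost surely. -/
theorem pkg_unique [SigmaFinite ν] (hb : BorelLocIntegrable b T) (huniq : CEUniqueness b T)
    {m' : ℝ → Ω → Measure (EuclideanSpace ℝ (Fin d))}
    (h : Pkg b T ν m) (h' : Pkg b T ν m') (h0 : ∀ᵐ ω ∂ν, m 0 ω = m' 0 ω) (hT : 0 < T) :
    ∀ᵐ ω ∂ν, ∀ t ∈ Icc 0 T, m t ω = m' t ω := by
  have := h.prob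
  have := h'.prob
  have key : ∀ t ∈ Icc 0 T, ∀ B, MeasurableSet B → ∀ᵐ ω ∂ν, m t ω B = m' t ω B := by
    intro t ht B hB
    refine ae_eq_of_forall_setLIntegral_eq_of_sigmaFinite
      ((Measure.measurable_coe hB).comp (h.meas_t t))
      ((Measure.measurable_coe hB).comp (h'.meas_t t)) fun A hA hAf => ?_
    have : IsFiniteMeasure (ν.restrict A) := ⟨by simpa using hAf⟩
    have g := h.restrict A
    have g' := h'.restrict A
    have e := huniq _ _ (avg_class _ g) (avg_class _ g') (avg_cont _ g) (avg_cont _ g')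
      (avg_solves hb _ g) (avg_solves hb _ g')
      (Measure.bind_congr_right (ae_restrict_of_ae h0)) t ht
    have e : (ν.restrict A).bind (m t) B = (ν.restrict A).bind (m' t) B :=
      congrArg (fun μ => μ B) e
    rwa [Measure.bind_apply hB (h.meas_t t).aemeasurable,
      Measure.bind_apply hB (h'.meas_t t).aemeasurable] at e
  have key2 : ∀ t ∈ Icc 0 T, ∀ᵐ ω ∂ν, m t ω = m' t ω := by
    intro t ht
    obtain ⟨S, hSc, -, -, hSm, hSg⟩ : ∃ S : Set (Set (EuclideanSpace ℝ (Fin d))), S.Countable ∧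
        IsPiSystem S ∧ True ∧ (∀ s ∈ S, MeasurableSet s) ∧
        (∀ μ₁ μ₂ : Measure (EuclideanSpace ℝ (Fin d)), IsProbabilityMeasure μ₁ →
          IsProbabilityMeasure μ₂ → (∀ s ∈ S, μ₁ s = μ₂ s) → μ₁ = μ₂) := by
      let S0 := MeasurableSpace.countableGeneratingSet (EuclideanSpace ℝ (Fin d))
      have hgen := (MeasurableSpace.generateFrom_countableGeneratingSet
        (α := EuclideanSpace ℝ (Fin d))).symm.trans
          (generateFrom_generateSetAlgebra_eq (𝒜 := S0)).symm
      have hpi : IsPiSystem (generateSetAlgebra S0) := fun s hs t ht _ =>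
        isSetAlgebra_generateSetAlgebra.inter_mem hs ht
      refine ⟨generateSetAlgebra S0, ?_, hpi, trivial, ?_, ?_⟩
      · exact countable_generateSetAlgebra MeasurableSpace.countable_countableGeneratingSet
      · intro s hs
        rw [hgen]
        exact MeasurableSpace.measurableSet_generateFrom hs
      · intro μ₁ μ₂ _ _ hs
        exact ext_of_generate_finite (generateSetAlgebra S0) hgen hpi hs (by simp)
    have := (ae_ball_iff hSc).2 fun s hs => key t ht s (hSm s hs)
    filter_upwards [this] with ω hω
    exact hSg _ _ inferInstance inferInstance hω
  have : Nonempty (Icc (0:ℝ) T) := ⟨⟨0, le_rfl, hT.le⟩⟩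
  have key3 : ∀ᵐ ω ∂ν, ∀ n, m (TopologicalSpace.denseSeq (Icc (0:ℝ) T) n) ω =
      m' (TopologicalSpace.denseSeq (Icc (0:ℝ) T) n) ω :=
    ae_all_iff.2 fun n => key2 _ (TopologicalSpace.denseSeq (Icc (0:ℝ) T) n).2
  filter_upwards [key3] with ω hω t ht
  refine eq_of_cc _ _ fun φ hφ hs => ?_
  have hc : Continuous fun s : Icc (0:ℝ) T => ∫ x, φ x ∂(m s ω) :=
    (h.cont ω φ hφ hs).comp continuous_subtype_val
  have hc' : Continuous fun s : Icc (0:ℝ) T => ∫ x, φ x ∂(m' s ω) :=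
    (h'.cont ω φ hφ hs).comp continuous_subtype_val
  have := (TopologicalSpace.denseRange_denseSeq (Icc (0:ℝ) T)).equalizer hc hc'
    (funext fun n => by simp only [Function.comp, hω n])
  exact congrFun this ⟨t, ht⟩


/-- The measurable version of a `ν`-RLF. -/
theorem exists_pkg (hT : 0 < T) (ν : Measure (ProbabilityMeasure (EuclideanSpace ℝ (Fin d))))
    (M : ℝ → ProbabilityMeasure (EuclideanSpace ℝ (Fin d)) →
      ProbabilityMeasure (EuclideanSpace ℝ (Fin d)))
    (hM : IsMeasureRLF b T ν M) :
    ∃ m : ℝ → ProbabilityMeasure (EuclideanSpace ℝ (Fin d)) →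
      Measure (EuclideanSpace ℝ (Fin d)), Pkg b T ν m ∧
      (∀ᵐ μ ∂ν, ∀ t ∈ Icc 0 T, m t μ = (M t μ : Measure (EuclideanSpace ℝ (Fin d)))) ∧
      ∀ᵐ μ ∂ν, m 0 μ = (μ : Measure (EuclideanSpace ℝ (Fin d))) := by
  classical
  obtain ⟨hae, hmeas, C, hC⟩ := hM
  have : Nonempty (Icc (0:ℝ) T) := ⟨⟨0, le_rfl, hT.le⟩⟩
  let D : ℕ → Icc (0:ℝ) T := TopologicalSpace.denseSeq (Icc (0:ℝ) T)
  have hD : DenseRange D := TopologicalSpace.denseRange_denseSeq _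
  have hmk : ∀ᵐ μ ∂ν, ∀ n, M (D n) μ = (hmeas (D n) (D n).2).mk (M (D n)) μ :=
    ae_all_iff.2 fun n => (hmeas (D n) (D n).2).ae_eq_mk
  have hboth := hae.and hmk
  obtain ⟨G, hGae, hGm, hGsub⟩ := hboth.exists_measurable_mem
  let p : ℝ → Icc (0:ℝ) T := projIcc 0 T hT.le
  let m : ℝ → ProbabilityMeasure (EuclideanSpace ℝ (Fin d)) → Measure (EuclideanSpace ℝ (Fin d)) :=
    fun t μ => if μ ∈ G then (M (p t) μ : Measure (EuclideanSpace ℝ (Fin d)))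
      else Measure.dirac 0
  have hmG : ∀ t, ∀ μ ∈ G, m t μ = (M (p t) μ : Measure (EuclideanSpace ℝ (Fin d))) :=
    fun t μ hμ => if_pos hμ
  have hmN : ∀ t, ∀ μ ∉ G, m t μ = Measure.dirac 0 := fun t μ hμ => if_neg hμ
  have hmI : ∀ t ∈ Icc 0 T, ∀ μ ∈ G, m t μ = (M t μ : Measure (EuclideanSpace ℝ (Fin d))) := by
    intro t ht μ hμ
    rw [hmG t μ hμ]
    simp only [p, projIcc_of_mem hT.le ht]
  have hprob : ∀ t μ, IsProbabilityMeasure (m t μ) := by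
    intro t μ
    by_cases hμ : μ ∈ G
    · rw [hmG t μ hμ]; infer_instance
    · rw [hmN t μ hμ]; infer_instance
  have hcont : ∀ μ, ∀ φ : EuclideanSpace ℝ (Fin d) → ℝ, Continuous φ → HasCompactSupport φ →
      Continuous fun t => ∫ x, φ x ∂(m t μ) := by
    intro μ φ hφ hs
    by_cases hμ : μ ∈ G
    · simp only [hmG _ μ hμ]
      have := continuousOn_iff_continuous_domRestrict.1 ((hGsub μ hμ).1.2.2.1 φ hφ hs)
      exact this.comp continuous_projIcc
    · simp only [hmN _ μ hμ]
      exact continuous_const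
  have hmD : ∀ n, Measurable (m (D n)) := by
    intro n
    have h1 : m (D n) = fun μ => if μ ∈ G then
        (((hmeas (D n) (D n).2).mk (M (D n)) μ : ProbabilityMeasure (EuclideanSpace ℝ (Fin d))) :
          Measure (EuclideanSpace ℝ (Fin d))) else Measure.dirac 0 := by
      funext μ
      by_cases hμ : μ ∈ G
      · rw [hmI _ (D n).2 μ hμ, if_pos hμ, (hGsub μ hμ).2 n]
      · rw [hmN _ μ hμ, if_neg hμ]
    rw [h1]
    exact Measurable.ite hGm (measurable_subtype_coe.comp (hmeas (D n) (D n).2).measurable_mk)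
      measurable_const
  have hmt : ∀ t, ∀ φ : EuclideanSpace ℝ (Fin d) → ℝ, Continuous φ → HasCompactSupport φ →
      Measurable fun μ => ∫ x, φ x ∂(m t μ) := by
    intro t φ hφ hs
    have hpp : ∀ μ, m t μ = m (p t) μ := by
      intro μ
      by_cases hμ : μ ∈ G
      · rw [hmG _ μ hμ, hmI _ (p t).2 μ hμ]
      · rw [hmN _ μ hμ, hmN _ μ hμ]
    obtain ⟨u, hu, hut⟩ := mem_closure_iff_seq_limit.1 (hD (p t))
    choose k hk using hu
    simp only [hpp]
    refine measurable_of_tendsto_metrizable (f := fun n μ => ∫ x, φ x ∂(m (u n) μ)) ?_ ?_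
    · intro n
      rw [← hk n]
      have := hprob (D (k n))
      exact measurable_integral_family _ (hmD (k n)) φ hφ.measurable
    · rw [tendsto_pi_nhds]
      intro μ
      exact (((hcont μ φ hφ hs).comp continuous_subtype_val).tendsto (p t)).comp hut
  have hm : Measurable (Function.uncurry m) := by
    have : ∀ q : ℝ × ProbabilityMeasure (EuclideanSpace ℝ (Fin d)),
        IsProbabilityMeasure (Function.uncurry m q) := fun q => hprob q.1 q.2
    refine measurable_of_cc _ fun φ hφ hs => ?_
    exact measurable_uncurry_of_continuous_of_measurable
      (u := fun t μ => ∫ x, φ x ∂(m t μ)) (fun μ => hcont μ φ hφ hs) (fun t => hmt t φ hφ hs)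
  have haeI : ∀ᵐ μ ∂ν, ∀ t ∈ Icc 0 T, m t μ = (M t μ : Measure (EuclideanSpace ℝ (Fin d))) := by
    filter_upwards [hGae] with μ hμ t ht using hmI t ht μ hμ
  refine ⟨m, ⟨hprob, hm, hcont, ?_, C, fun t ht => ?_⟩, haeI, ?_⟩
  · filter_upwards [hGae] with μ hμ φ hφ hφs ψ hψ hψs hψT
    have := (hGsub μ hμ).1.2.2.2 φ hφ hφs ψ hψ hψs hψT
    refine Eq.trans ?_ this
    refine setIntegral_congr_fun (measurableSet_Ioo (a := (0:ℝ)) (b := T)) fun t ht => ?_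
    simp only [hmI t (Ioo_subset_Icc_self ht) μ hμ]
  · refine le_trans (le_of_eq ?_) (hC t ht)
    have hmt' : Measurable (m t) := hm.comp measurable_prodMk_left
    ext s hs
    have hco : Measurable fun μ : ProbabilityMeasure (EuclideanSpace ℝ (Fin d)) =>
        (μ : Measure (EuclideanSpace ℝ (Fin d))) := measurable_subtype_coe
    have hcs : Measurable fun μ : ProbabilityMeasure (EuclideanSpace ℝ (Fin d)) =>
        (μ : Measure (EuclideanSpace ℝ (Fin d))) s := (Measure.measurable_coe hs).comp hco
    rw [expectation, Measure.bind_apply hs hmt'.aemeasurable,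
      Measure.bind_apply hs hco.aemeasurable,
      lintegral_map' hcs.aemeasurable
        (hmeas t ht)]
    refine lintegral_congr_ae ?_
    filter_upwards [haeI] with μ hμ
    rw [hμ t ht]
  · filter_upwards [hGae] with μ hμ
    rw [hmI 0 ⟨le_rfl, hT.le⟩ μ hμ, (hGsub μ hμ).1.1]

end helpers
/-- Uniqueness of the `𝛎`-RLF in `P(ℝ^d)`.
If the continuity equation has uniqueness in `L∞₊([0,T]; L¹ ∩ L∞)`, then for every regular
nonnegative σ-finite measure `𝛎` on `P(ℝ^d)` there is at most one `𝛎`-RLF in `P(ℝ^d)`: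
any two of them coincide, for `𝛎`-a.e. `μ`, at every time `t ∈ [0,T]`. -/
theorem uniqueness_of_nu_RLF_on_P {d : ℕ} (T : ℝ) (hT : 0 < T)
    (b : ℝ → EuclideanSpace ℝ (Fin d) → EuclideanSpace ℝ (Fin d))
    (hb : BorelLocIntegrable b T)
    (huniq : CEUniqueness b T)
    (ν : Measure (ProbabilityMeasure (EuclideanSpace ℝ (Fin d))))
    [SigmaFinite ν] (hreg : IsRegularOnP ν)
    (M₁ M₂ : ℝ → ProbabilityMeasure (EuclideanSpace ℝ (Fin d)) →
      ProbabilityMeasure (EuclideanSpace ℝ (Fin d)))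
    (h₁ : IsMeasureRLF b T ν M₁) (h₂ : IsMeasureRLF b T ν M₂) :
    ∀ᵐ μ ∂ν, ∀ t ∈ Icc 0 T, M₁ t μ = M₂ t μ := by
  obtain ⟨m₁, p₁, e₁, z₁⟩ := exists_pkg hT ν M₁ h₁
  obtain ⟨m₂, p₂, e₂, z₂⟩ := exists_pkg hT ν M₂ h₂
  have h0 : ∀ᵐ μ ∂ν, m₁ 0 μ = m₂ 0 μ := by
    filter_upwards [z₁, z₂] with μ a c using a.trans c.symm
  filter_upwards [e₁, e₂, pkg_unique hb huniq p₁ p₂ h0 hT] with μ a c e t ht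
  exact Subtype.ext ((a t ht).symm.trans ((e t ht).trans (c t ht)))

end
end

section
/- Assume that the continuity equation d/dt w_t + ∇·(b_t w_t) = 0 has both existence and uniqueness in L∞₊([0,T]; L¹(ℝ^d) ∩ L∞(ℝ^d)). Let 𝛎 be a regular nonnegative σ-finite measure on P(ℝ^d) and let X be the unique (E𝛎)-regular Lagrangian flow in ℝ^d relative to b. Then the unique 𝛎-regular Lagrangian flow in P(ℝ^d) relative to b is given, for 𝛎-a.e. μ and all t ∈ [0,T], by 𝛍(t,μ) = ∫_{ℝ^d} δ_{X(t,x)} dμ(x), i.e. 𝛍(t,μ) is the pushforward X(t,·)_♯μ. -/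
open MeasureTheory Set Filter Metric Function
open scoped ENNReal NNReal Topology

noncomputable section

variable {E : Type*} [NormedAddCommGroup E] [NormedSpace ℝ E] [MeasureSpace E]

section Aux

set_option linter.unusedSectionVars false

variable [BorelSpace E] [FiniteDimensional ℝ E]

lemma ac_comp_integral {T : ℝ} (hT : 0 < T) (x : E) (g : ℝ → E)
    (hg : IntegrableOn g (Icc 0 T)) (φ : E → ℝ) {L : ℝ≥0} (hL : LipschitzWith L φ) :
    AbsolutelyContinuousOnInterval (fun t => φ (x + ∫ s in (0:ℝ)..t, g s)) 0 T := by
  have hgi : IntervalIntegrable g volume 0 T := by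
    rw [intervalIntegrable_iff_integrableOn_Icc_of_le hT.le]; exact hg
  have hac := (hgi.norm.absolutelyContinuousOnInterval_intervalIntegral
    (c := 0) (by simp)).const_mul (L : ℝ)
  unfold AbsolutelyContinuousOnInterval at hac ⊢
  refine squeeze_zero' (Eventually.of_forall fun F => Finset.sum_nonneg fun _ _ => dist_nonneg)
    ?_ hac
  have : ∀ᶠ F in (AbsolutelyContinuousOnInterval.totalLengthFilter ⊓
      𝓟 (AbsolutelyContinuousOnInterval.disjWithin 0 T)),
      F ∈ AbsolutelyContinuousOnInterval.disjWithin 0 T :=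
    Filter.mem_inf_of_right (mem_principal_self _)
  filter_upwards [this] with F hF
  refine Finset.sum_le_sum fun i hi => ?_
  have hmem := hF.1 i hi
  have hsub : ∀ u ∈ uIcc 0 T, IntervalIntegrable g volume 0 u := fun u hu =>
    hgi.mono_set (uIcc_subset_uIcc_left hu)
  set p := (F.2 i).1
  set q := (F.2 i).2
  have hp := hsub p hmem.1
  have hq := hsub q hmem.2
  calc dist (φ (x + ∫ s in (0:ℝ)..p, g s)) (φ (x + ∫ s in (0:ℝ)..q, g s))
      ≤ L * dist (x + ∫ s in (0:ℝ)..p, g s) (x + ∫ s in (0:ℝ)..q, g s) := hL.dist_le_mul _ _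
    _ = L * ‖∫ s in q..p, g s‖ := by
        rw [dist_add_left, dist_eq_norm, intervalIntegral.integral_interval_sub_left hp hq]
    _ ≤ L * |∫ s in q..p, ‖g s‖| := by
        gcongr; exact intervalIntegral.norm_integral_le_abs_integral_norm
    _ = _ := by
        rw [Real.dist_eq, ← mul_sub, intervalIntegral.integral_interval_sub_left hp.norm hq.norm,
          abs_mul, NNReal.abs_eq]

lemma curve_weak {T : ℝ} (hT : 0 < T) (x : E) (g : ℝ → E)
    (hg : IntegrableOn g (Icc 0 T)) (Y : ℝ → E)
    (hY : ∀ t ∈ Icc 0 T, Y t = x + ∫ s in (0:ℝ)..t, g s)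
    (φ : E → ℝ) (hφ : ContDiff ℝ (⊤ : ℕ∞) φ) (hφc : HasCompactSupport φ)
    (ψ : ℝ → ℝ) (hψ : ContDiff ℝ (⊤ : ℕ∞) ψ) (hψs : tsupport ψ ⊆ Ioo 0 T) :
    ∫ t in Ioo 0 T, (deriv ψ t * φ (Y t) + ψ t * (fderiv ℝ φ (Y t)) (g t)) = 0 := by
  have hφ1 : ContDiff ℝ 1 φ := hφ.of_le (by exact_mod_cast le_top)
  obtain ⟨L, hL⟩ := ContDiff.lipschitzWith_of_hasCompactSupport hφc hφ1 one_ne_zero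
  have hgi : IntervalIntegrable g volume 0 T := by
    rw [intervalIntegrable_iff_integrableOn_Icc_of_le hT.le]; exact hg
  have hac := ac_comp_integral hT x g hg φ hL
  have hψ1 : ContDiff ℝ 1 ψ := hψ.of_le (by exact_mod_cast le_top)
  have hψac : AbsolutelyContinuousOnInterval ψ 0 T :=
    hψ1.contDiffOn.absolutelyContinuousOnInterval
  have h0 : ψ 0 = 0 := by
    by_contra h
    exact lt_irrefl _ (hψs (subset_tsupport _ h)).1
  have h1 : ψ T = 0 := by
    by_contra h
    exact lt_irrefl _ (hψs (subset_tsupport _ h)).2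
  have key := hψac.integral_deriv_mul_eq_sub hac
  rw [h0, h1, intervalIntegral.integral_of_le hT.le, integral_Ioc_eq_integral_Ioo] at key
  simp only [zero_mul, sub_zero] at key
  refine Eq.trans (integral_congr_ae ?_) key
  have hd := ae_restrict_of_ae (s := Ioo 0 T) hgi.ae_hasDerivAt_integral
  filter_upwards [hd, ae_restrict_mem measurableSet_Ioo] with t ht htm
  have htI : t ∈ Icc 0 T := Ioo_subset_Icc_self htm
  have h2 := ht (by rwa [uIcc_of_le hT.le]) 0 (by simp)
  have h3 : HasDerivAt (fun t => φ (x + ∫ s in (0:ℝ)..t, g s))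
      ((fderiv ℝ φ (x + ∫ s in (0:ℝ)..t, g s)) (g t)) t := by
    have h4 : HasFDerivAt φ (fderiv ℝ φ (x + ∫ s in (0:ℝ)..t, g s))
        (x + ∫ s in (0:ℝ)..t, g s) := (hφ1.differentiable one_ne_zero _).hasFDerivAt
    have h5 : HasDerivAt (fun t => x + ∫ s in (0:ℝ)..t, g s) (g t) t := h2.const_add x
    exact h4.comp_hasDerivAt t h5
  rw [h3.deriv, hY t htI]

lemma measurable_uncurry_of_dense {α β : Type*} [MeasurableSpace α] [TopologicalSpace β]
    [TopologicalSpace.PseudoMetrizableSpace β] [MeasurableSpace β] [BorelSpace β]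
    (u : ℝ → α → β) (hu : ∀ x, Continuous fun t => u t x)
    (hm : ∀ q : ℚ, Measurable (u q)) : Measurable (uncurry u) := by
  refine measurable_uncurry_of_continuous_of_measurable hu fun t => ?_
  obtain ⟨s, hs⟩ : ∃ s : ℕ → ℚ, Tendsto (fun n => (s n : ℝ)) atTop (𝓝 t) := by
    have := (Rat.denseRange_cast (𝕜 := ℝ)) t
    rw [mem_closure_iff_seq_limit] at this
    obtain ⟨x, hx, hxt⟩ := this
    choose s hs using hx
    exact ⟨s, by simpa [hs] using hxt⟩
  refine measurable_of_tendsto_metrizable (fun n => hm (s n)) (tendsto_pi_nhds.2 fun x => ?_)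
  exact ((hu x).tendsto t).comp hs

lemma measurable_of_integral_Cc {α : Type*} [MeasurableSpace α] (κ : α → Measure E)
    [∀ a, IsProbabilityMeasure (κ a)]
    (h : ∀ φ : E → ℝ, Continuous φ → HasCompactSupport φ → Measurable fun a => ∫ x, φ x ∂κ a) :
    Measurable κ := by
  have hcomp : ∀ K : Set E, IsCompact K → Measurable fun a => κ a K := by
    intro K hK
    have hpos : ∀ n : ℕ, (0:ℝ) < 1 / ((n:ℝ) + 1) := fun n => by positivity
    have hlim : ∀ a, Tendsto (fun n : ℕ => ∫ x, (thickenedIndicator (hpos n) K x : ℝ) ∂κ a) atTop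
        (𝓝 ((κ a).real K)) := fun a =>
      tendsto_integral_thickenedIndicator_of_isClosed (κ a) hK.isClosed hpos
        tendsto_one_div_add_atTop_nhds_zero_nat
    have hr : Measurable fun a => (κ a).real K := by
      refine measurable_of_tendsto_metrizable (fun n => ?_) (tendsto_pi_nhds.2 hlim)
      refine h _ ?_ ?_
      · exact NNReal.continuous_coe.comp (thickenedIndicator (hpos n) K).continuous
      · refine HasCompactSupport.intro (hK.cthickening (r := 1 / ((n:ℝ) + 1))) fun x hx => ?_
        have : x ∉ thickening (1 / ((n:ℝ) + 1)) K := fun hx' => hx (thickening_subset_cthickening _ _ hx')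
        simpa using thickenedIndicator_zero (hpos n) K this
    have : (fun a => κ a K) = fun a => ENNReal.ofReal ((κ a).real K) := by
      ext a
      rw [ofReal_measureReal]
    rw [this]
    exact hr.ennreal_ofReal
  have hgen : ‹MeasureSpace E›.toMeasurableSpace = .generateFrom {s : Set E | IsClosed s} := by
    rw [BorelSpace.measurable_eq (α := E)]
    exact borel_eq_generateFrom_isClosed
  refine Measurable.measure_of_isPiSystem_of_isProbabilityMeasure hgen
    isPiSystem_isClosed fun F hF => ?_
  have hF : IsClosed F := hF
  have hlim : ∀ a, Tendsto (fun n : ℕ => κ a (F ∩ closedBall 0 n)) atTop (𝓝 (κ a F)) := by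
    intro a
    have := tendsto_measure_iUnion_atTop (μ := κ a) (s := fun n : ℕ => F ∩ closedBall (0:E) n)
      (fun i j hij => inter_subset_inter_right _ (closedBall_subset_closedBall (by exact_mod_cast hij)))
    rwa [← inter_iUnion, iUnion_closedBall_nat, inter_univ] at this
  exact measurable_of_tendsto_metrizable
    (fun n => hcomp _ ((isCompact_closedBall _ _).inter_left hF)) (tendsto_pi_nhds.2 hlim)

end Aux
section Avg

set_option linter.unusedSectionVars false

open ProbabilityTheory

variable [BorelSpace E] [FiniteDimensional ℝ E] [SigmaFinite (volume : Measure E)]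
variable {α : Type*} [MeasurableSpace α]

lemma measurable_inner_norm {b : ℝ → E → E} {T : ℝ} (hb : BorelLocIntegrable b T)
    (κ : Kernel (ℝ × α) E) [IsMarkovKernel κ] (R : ℝ) :
    Measurable fun p : ℝ × α => ∫⁻ x in closedBall (0:E) R, ‖b p.1 x‖ₑ ∂κ p := by
  have h : Measurable fun q : (ℝ × α) × E => (closedBall (0:E) R).indicator (fun x => ‖b q.1.1 x‖ₑ) q.2 := by
    have : (fun q : (ℝ × α) × E => (closedBall (0:E) R).indicator (fun x => ‖b q.1.1 x‖ₑ) q.2) =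
        (Prod.snd ⁻¹' closedBall (0:E) R).indicator (fun q => ‖uncurry b (q.1.1, q.2)‖ₑ) := by
      ext q; simp [indicator, uncurry]
    rw [this]
    exact ((hb.1.comp (by fun_prop)).enorm).indicator (measurable_snd isClosed_closedBall.measurableSet)
  have := h.lintegral_kernel_prod_right' (κ := κ)
  simpa only [lintegral_indicator isClosed_closedBall.measurableSet] using this

lemma lintegral_bind_section (κ : Kernel (ℝ × α) E) (ρ : Measure α) (t : ℝ)
    {f : E → ℝ≥0∞} (hf : Measurable f) :
    ∫⁻ x, f x ∂(ρ.bind fun a => κ (t, a)) = ∫⁻ a, ∫⁻ x, f x ∂κ (t, a) ∂ρ :=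
  Measure.lintegral_bind (κ.measurable.comp (by fun_prop)).aemeasurable hf.aemeasurable

lemma avg_finite_s3 {b : ℝ → E → E} {T : ℝ} (hb : BorelLocIntegrable b T)
    (κ : Kernel (ℝ × α) E) [IsMarkovKernel κ] (ρ : Measure α)
    (C : ℝ≥0) (hC : ∀ t ∈ Icc 0 T, ρ.bind (fun a => κ (t, a)) ≤ C • (volume : Measure E))
    (R : ℝ) :
    ∫⁻ t in Icc 0 T, ∫⁻ a, ∫⁻ x in closedBall (0:E) R, ‖b t x‖ₑ ∂κ (t, a) ∂ρ < ⊤ := by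
  have hfin := (hb.2 R).2
  rw [HasFiniteIntegral, Measure.volume_eq_prod, ← Measure.prod_restrict,
    lintegral_prod _ (hb.1.enorm.aemeasurable)] at hfin
  calc ∫⁻ t in Icc 0 T, ∫⁻ a, ∫⁻ x in closedBall (0:E) R, ‖b t x‖ₑ ∂κ (t, a) ∂ρ
      ≤ ∫⁻ t in Icc 0 T, C * ∫⁻ x in closedBall (0:E) R, ‖b t x‖ₑ := by
        refine setLIntegral_mono' measurableSet_Icc fun t ht => ?_
        have hbt : Measurable fun x => (closedBall (0:E) R).indicator (fun x => ‖b t x‖ₑ) x :=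
          ((hb.1.comp (measurable_prodMk_left (x := t))).enorm).indicator
            isClosed_closedBall.measurableSet
        simp_rw [← lintegral_indicator (isClosed_closedBall (x := (0:E)) (ε := R)).measurableSet]
        rw [← lintegral_bind_section κ ρ t hbt]
        refine (lintegral_mono' (hC t ht) le_rfl).trans ?_
        rw [lintegral_smul_measure]
        rfl
    _ = C * ∫⁻ t in Icc 0 T, ∫⁻ x in closedBall (0:E) R, ‖b t x‖ₑ := by
        rw [lintegral_const_mul' _ _ (by simp)]
    _ < ⊤ := ENNReal.mul_lt_top (by simp) hfin

lemma integral_bind_section (κ : Kernel (ℝ × α) E) [IsMarkovKernel κ] (ρ : Measure α) [SFinite ρ]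
    (t : ℝ) {f : E → ℝ} (hf : Measurable f)
    (hfi : ∫⁻ a, ∫⁻ x, ‖f x‖ₑ ∂κ (t, a) ∂ρ < ⊤) :
    ∫ x, f x ∂(ρ.bind fun a => κ (t, a)) = ∫ a, ∫ x, f x ∂κ (t, a) ∂ρ := by
  have hm : Measurable fun a : α => (t, a) := by fun_prop
  have hcomp : (ρ.bind fun a => κ (t, a)) = (κ.comap _ hm) ∘ₘ ρ := rfl
  have hint : Integrable f ((κ.comap _ hm) ∘ₘ ρ) := by
    refine ⟨hf.aestronglyMeasurable, ?_⟩
    rw [HasFiniteIntegral, ← hcomp, lintegral_bind_section κ ρ t hf.enorm]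
    exact hfi
  rw [hcomp]
  rw [Measure.comp_eq_comp_const_apply] at hint ⊢
  rw [Kernel.integral_comp hint]
  simp

lemma avg_weaklyContinuous {T : ℝ} (κ : Kernel (ℝ × α) E) [IsMarkovKernel κ] (ρ : Measure α)
    [IsFiniteMeasure ρ]
    (hc : ∀ᵐ a ∂ρ, WeaklyContinuous T fun t => κ (t, a)) :
    WeaklyContinuous T fun t => ρ.bind fun a => κ (t, a) := by
  intro φ hφ hφc
  obtain ⟨L, hL⟩ := hφc.exists_bound_of_continuous hφ
  have heq : ∀ t, ∫ x, φ x ∂(ρ.bind fun a => κ (t, a)) = ∫ a, ∫ x, φ x ∂κ (t, a) ∂ρ := by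
    intro t
    refine integral_bind_section κ ρ t hφ.measurable ?_
    calc ∫⁻ a, ∫⁻ x, ‖φ x‖ₑ ∂κ (t, a) ∂ρ ≤ ∫⁻ a, ∫⁻ x, ENNReal.ofReal L ∂κ (t, a) ∂ρ := by
          refine lintegral_mono fun a => lintegral_mono fun x => ?_
          rw [← ofReal_norm]
          exact ENNReal.ofReal_le_ofReal (hL x)
      _ < ⊤ := by simpa using ENNReal.mul_lt_top (by simp) (measure_lt_top _ _)
  simp_rw [heq]
  refine continuousOn_of_dominated (bound := fun _ => L) ?_ ?_ (integrable_const _) ?_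
  · intro t ht
    have : StronglyMeasurable fun p : ℝ × α => ∫ x, φ x ∂κ p :=
      StronglyMeasurable.integral_kernel_prod_right' (κ := κ) (f := fun q => φ q.2)
        (hφ.measurable.comp measurable_snd).stronglyMeasurable
    exact (this.comp_measurable (measurable_prodMk_left (x := t))).aestronglyMeasurable
  · intro t ht
    refine Eventually.of_forall fun a => ?_
    simpa using norm_integral_le_of_norm_le_const (μ := κ (t, a)) (Eventually.of_forall hL)
  · filter_upwards [hc] with a ha using ha φ hφ hφc

lemma avg_solves_s3 {b : ℝ → E → E} {T : ℝ} (hb : BorelLocIntegrable b T)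
    (κ : Kernel (ℝ × α) E) [IsMarkovKernel κ] (ρ : Measure α) [IsFiniteMeasure ρ]
    (hfin : ∀ R, ∫⁻ t in Icc 0 T, ∫⁻ a, ∫⁻ x in closedBall (0:E) R, ‖b t x‖ₑ ∂κ (t, a) ∂ρ < ⊤)
    (hs : ∀ᵐ a ∂ρ, SolvesContinuityEquation b T fun t => κ (t, a)) :
    SolvesContinuityEquation b T fun t => ρ.bind fun a => κ (t, a) := by
  intro φ hφ hφc ψ hψ hψc hψs
  have hφ1 : ContDiff ℝ 1 φ := hφ.of_le (by exact_mod_cast le_top)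
  have hψ1 : ContDiff ℝ 1 ψ := hψ.of_le (by exact_mod_cast le_top)
  obtain ⟨L, hL⟩ := hφc.exists_bound_of_continuous hφ.continuous
  have hdc : Continuous (fderiv ℝ φ) := hφ1.continuous_fderiv one_ne_zero
  have hdcs : HasCompactSupport (fderiv ℝ φ) := hφc.fderiv ℝ
  obtain ⟨L', hL'⟩ := hdcs.exists_bound_of_continuous hdc
  obtain ⟨P, hP⟩ := hψc.exists_bound_of_continuous hψ.continuous
  obtain ⟨P', hP'⟩ := hψc.deriv.exists_bound_of_continuous (hψ1.continuous_deriv le_rfl)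
  obtain ⟨R, hR⟩ := hdcs.isCompact.isBounded.subset_closedBall (0:E)
  have hbd : ∀ t x, ‖fderiv ℝ φ x (b t x)‖ₑ ≤
      ENNReal.ofReal L' * (closedBall (0:E) R).indicator (fun x => ‖b t x‖ₑ) x := by
    intro t x
    by_cases hx : x ∈ closedBall (0:E) R
    · rw [indicator_of_mem hx, ← ofReal_norm, ← ofReal_norm,
        ← ENNReal.ofReal_mul ((norm_nonneg _).trans (hL' x))]
      refine ENNReal.ofReal_le_ofReal (((fderiv ℝ φ x).le_opNorm _).trans ?_)
      gcongr
      exact hL' x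
    · have : fderiv ℝ φ x = 0 := by
        by_contra h
        exact hx (hR (subset_tsupport _ h))
      simp [this]
  have hball : MeasurableSet (closedBall (0:E) R) := isClosed_closedBall.measurableSet
  have hbd2 : ∀ p : ℝ × α, ∫⁻ x, ‖fderiv ℝ φ x (b p.1 x)‖ₑ ∂κ p ≤
      ENNReal.ofReal L' * ∫⁻ x in closedBall (0:E) R, ‖b p.1 x‖ₑ ∂κ p := by
    intro p
    rw [← lintegral_indicator hball, ← lintegral_const_mul' _ _ (by simp)]
    exact lintegral_mono fun x => hbd p.1 x
  have hGm : Measurable fun q : ℝ × E => fderiv ℝ φ q.2 (b q.1 q.2) := by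
    have h1 : Measurable fun q : ℝ × E => fderiv ℝ φ q.2 := hdc.measurable.comp measurable_snd
    have h2 : Measurable fun q : ℝ × E => b q.1 q.2 := hb.1
    exact (isBoundedBilinearMap_apply (𝕜 := ℝ) (E := E) (F := ℝ)).continuous.measurable.comp
      (h1.prodMk h2)
  have hF1 : StronglyMeasurable fun p : ℝ × α => ∫ x, φ x ∂κ p :=
    StronglyMeasurable.integral_kernel_prod_right' (κ := κ) (f := fun q => φ q.2)
      (hφ.continuous.measurable.comp measurable_snd).stronglyMeasurable
  have hF2 : StronglyMeasurable fun p : ℝ × α => ∫ x, fderiv ℝ φ x (b p.1 x) ∂κ p := by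
    refine StronglyMeasurable.integral_kernel_prod_right' (κ := κ)
      (f := fun q => fderiv ℝ φ q.2 (b q.1.1 q.2)) ?_
    exact (hGm.comp (f := fun q : (ℝ × α) × E => (q.1.1, q.2)) (by fun_prop)).stronglyMeasurable
  set m : Measure ℝ := volume.restrict (Ioo 0 T) with hm
  have hfin' : ∫⁻ t, ∫⁻ a, ∫⁻ x in closedBall (0:E) R, ‖b t x‖ₑ ∂κ (t, a) ∂ρ ∂m < ⊤ :=
    (lintegral_mono_set Ioo_subset_Icc_self).trans_lt (hfin R)
  have hI1 : Integrable (fun p : ℝ × α => deriv ψ p.1 * ∫ x, φ x ∂κ p) (m.prod ρ) := by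
    refine Integrable.of_bound (C := P' * L) ?_ (Eventually.of_forall fun p => ?_)
    · exact (((hψ1.continuous_deriv le_rfl).measurable.comp measurable_fst).stronglyMeasurable.mul
        hF1).aestronglyMeasurable
    · rw [norm_mul]
      gcongr
      · exact (norm_nonneg _).trans (hP' p.1)
      · exact hP' _
      · simpa using norm_integral_le_of_norm_le_const (μ := κ p) (Eventually.of_forall hL)
  have hI2' : Integrable (fun p : ℝ × α => ∫ x, fderiv ℝ φ x (b p.1 x) ∂κ p) (m.prod ρ) := by
    refine ⟨hF2.aestronglyMeasurable, ?_⟩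
    rw [HasFiniteIntegral]
    calc ∫⁻ p, ‖∫ x, fderiv ℝ φ x (b p.1 x) ∂κ p‖ₑ ∂(m.prod ρ)
        ≤ ∫⁻ p, ENNReal.ofReal L' * ∫⁻ x in closedBall (0:E) R, ‖b p.1 x‖ₑ ∂κ p ∂(m.prod ρ) :=
          lintegral_mono fun p => (enorm_integral_le_lintegral_enorm _).trans (hbd2 p)
      _ = ENNReal.ofReal L' * ∫⁻ t, ∫⁻ a, ∫⁻ x in closedBall (0:E) R, ‖b t x‖ₑ ∂κ (t, a) ∂ρ ∂m := by
          rw [lintegral_const_mul' _ _ (by simp),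
            lintegral_prod _ (measurable_inner_norm hb κ R).aemeasurable]
      _ < ⊤ := ENNReal.mul_lt_top (by simp) hfin'
  have hI2 : Integrable (fun p : ℝ × α => ψ p.1 * ∫ x, fderiv ℝ φ x (b p.1 x) ∂κ p) (m.prod ρ) :=
    hI2'.bdd_mul (c := P) (hψ.continuous.measurable.comp measurable_fst).aestronglyMeasurable
      (Eventually.of_forall fun p => hP p.1)
  have hI := hI1.add hI2
  have hae : ∀ᵐ t ∂m, ∫⁻ a, ∫⁻ x in closedBall (0:E) R, ‖b t x‖ₑ ∂κ (t, a) ∂ρ < ⊤ :=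
    ae_lt_top (measurable_inner_norm hb κ R).lintegral_prod_right' hfin'.ne
  have heq1 : ∀ t, ∫ x, φ x ∂(ρ.bind fun a => κ (t, a)) = ∫ a, ∫ x, φ x ∂κ (t, a) ∂ρ := by
    intro t
    refine integral_bind_section κ ρ t hφ.continuous.measurable ?_
    calc ∫⁻ a, ∫⁻ x, ‖φ x‖ₑ ∂κ (t, a) ∂ρ ≤ ∫⁻ a, ∫⁻ x, ENNReal.ofReal L ∂κ (t, a) ∂ρ := by
          refine lintegral_mono fun a => lintegral_mono fun x => ?_
          rw [← ofReal_norm]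
          exact ENNReal.ofReal_le_ofReal (hL x)
      _ < ⊤ := by simpa using ENNReal.mul_lt_top (by simp) (measure_lt_top _ _)
  have heq2 : ∀ᵐ t ∂m, ∫ x, fderiv ℝ φ x (b t x) ∂(ρ.bind fun a => κ (t, a)) =
      ∫ a, ∫ x, fderiv ℝ φ x (b t x) ∂κ (t, a) ∂ρ := by
    filter_upwards [hae] with t ht
    refine integral_bind_section κ ρ t (hGm.comp (measurable_prodMk_left (x := t))) ?_
    calc ∫⁻ a, ∫⁻ x, ‖fderiv ℝ φ x (b t x)‖ₑ ∂κ (t, a) ∂ρ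
        ≤ ∫⁻ a, ENNReal.ofReal L' * ∫⁻ x in closedBall (0:E) R, ‖b t x‖ₑ ∂κ (t, a) ∂ρ :=
          lintegral_mono fun a => hbd2 (t, a)
      _ = ENNReal.ofReal L' * ∫⁻ a, ∫⁻ x in closedBall (0:E) R, ‖b t x‖ₑ ∂κ (t, a) ∂ρ :=
          lintegral_const_mul' _ _ (by simp)
      _ < ⊤ := ENNReal.mul_lt_top (by simp) ht
  calc ∫ t, (deriv ψ t * ∫ x, φ x ∂(ρ.bind fun a => κ (t, a)) +
        ψ t * ∫ x, fderiv ℝ φ x (b t x) ∂(ρ.bind fun a => κ (t, a))) ∂m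
      = ∫ t, ∫ a, (deriv ψ t * ∫ x, φ x ∂κ (t, a) +
          ψ t * ∫ x, fderiv ℝ φ x (b t x) ∂κ (t, a)) ∂ρ ∂m := by
        refine integral_congr_ae ?_
        filter_upwards [heq2, hI1.prod_right_ae, hI2.prod_right_ae] with t h2 h3 h4
        rw [heq1, h2, integral_add h3 h4, integral_const_mul, integral_const_mul]
    _ = ∫ a, ∫ t, (deriv ψ t * ∫ x, φ x ∂κ (t, a) +
          ψ t * ∫ x, fderiv ℝ φ x (b t x) ∂κ (t, a)) ∂m ∂ρ := integral_integral_swap hI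
    _ = ∫ a, 0 ∂ρ := by
        refine integral_congr_ae ?_
        filter_upwards [hs] with a ha using ha φ hφ hφc ψ hψ hψc hψs
    _ = 0 := by simp

end Avg
section Main

set_option linter.unusedSectionVars false

open ProbabilityTheory

variable [BorelSpace E] [FiniteDimensional ℝ E] [SigmaFinite (volume : Measure E)]

lemma measurable_coeP : Measurable (fun μ : ProbabilityMeasure E => (μ : Measure E)) :=
  measurable_subtype_coe

lemma measurable_integral_P {φ : E → ℝ} (hφ : Continuous φ) :
    Measurable fun μ : ProbabilityMeasure E => ∫ x, φ x ∂(μ : Measure E) := by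
  let κ : Kernel (ProbabilityMeasure E) E := ⟨fun μ => (μ : Measure E), measurable_coeP⟩
  have : IsMarkovKernel κ := ⟨fun μ => inferInstanceAs (IsProbabilityMeasure (μ : Measure E))⟩
  exact (StronglyMeasurable.integral_kernel_prod_right' (κ := κ) (f := fun q => φ q.2)
      (hφ.measurable.comp measurable_snd).stronglyMeasurable).measurable

lemma expectation_map {ν : Measure (ProbabilityMeasure E)}
    {M : ProbabilityMeasure E → ProbabilityMeasure E} (hM : AEMeasurable M ν) :
    expectation (Measure.map M ν) = ν.bind fun μ => (M μ : Measure E) := by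
  unfold expectation Measure.bind
  rw [AEMeasurable.map_map_of_aemeasurable measurable_coeP.aemeasurable hM]
  rfl

lemma exists_good_set {β : Type*} [MeasurableSpace β] {m : Measure β} {P : β → Prop}
    (h : ∀ᵐ x ∂m, P x) : ∃ G : Set β, MeasurableSet G ∧ (∀ᵐ x ∂m, x ∈ G) ∧ ∀ x ∈ G, P x := by
  obtain ⟨G, hG, hGm, hGP⟩ := h.exists_measurable_mem
  exact ⟨G, hGm, hG, hGP⟩

lemma exists_kernel {b : ℝ → E → E} {T : ℝ} (hT : 0 < T) {ν : Measure (ProbabilityMeasure E)}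
    {M : ℝ → ProbabilityMeasure E → ProbabilityMeasure E} (hM : IsMeasureRLF b T ν M) :
    ∃ κ : Kernel (ℝ × ProbabilityMeasure E) E, IsMarkovKernel κ ∧
      ∀ᵐ μ ∂ν, ∀ t ∈ Icc 0 T, κ (t, μ) = (M t μ : Measure E) := by
  classical
  obtain ⟨h1, h2, -⟩ := hM
  let c : ℝ → ℝ := fun t => (projIcc 0 T hT.le t : ℝ)
  have hcm : ∀ t, c t ∈ Icc 0 T := fun t => (projIcc 0 T hT.le t).2
  have hcc : Continuous c := continuous_subtype_val.comp continuous_projIcc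
  have hce : ∀ t ∈ Icc 0 T, c t = t := fun t ht => by simp [c, projIcc_of_mem _ ht]
  have hgood : ∀ᵐ μ ∂ν, (∀ φ : E → ℝ, Continuous φ → HasCompactSupport φ →
        ContinuousOn (fun t => ∫ x, φ x ∂(M t μ : Measure E)) (Icc 0 T)) ∧
      ∀ q : ℚ, M (c q) μ = (h2 (c q) (hcm q)).mk _ μ := by
    have : ∀ᵐ μ ∂ν, ∀ q : ℚ, M (c q) μ = (h2 (c q) (hcm q)).mk _ μ :=
      ae_all_iff.2 fun q => (h2 (c q) (hcm q)).ae_eq_mk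
    filter_upwards [h1, this] with μ h h' using ⟨h.2.2.1, h'⟩
  obtain ⟨G, hGm, hGae, hG⟩ := exists_good_set hgood
  let M' : ℝ → ProbabilityMeasure E → ProbabilityMeasure E :=
    fun t μ => if μ ∈ G then M (c t) μ else μ
  have hmeas : Measurable fun p : ℝ × ProbabilityMeasure E => (M' p.1 p.2 : Measure E) := by
    refine measurable_of_integral_Cc _ fun φ hφ hφc => ?_
    refine measurable_uncurry_of_dense (fun t μ => ∫ x, φ x ∂(M' t μ : Measure E)) ?_ ?_
    · intro μ
      by_cases hμ : μ ∈ G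
      · simp only [M', hμ, if_true]
        exact ((hG μ hμ).1 φ hφ hφc).comp_continuous hcc hcm
      · simp only [M', hμ, if_false]
        exact continuous_const
    · intro q
      have : (fun μ => M' q μ) = fun μ => if μ ∈ G then (h2 (c q) (hcm q)).mk _ μ else μ := by
        ext1 μ
        by_cases hμ : μ ∈ G
        · simp only [M', hμ, if_true]
          exact (hG μ hμ).2 q
        · simp only [M', hμ, if_false]
      have hm : Measurable (fun μ => M' q μ) := by
        rw [this]
        exact Measurable.ite hGm (h2 (c q) (hcm q)).measurable_mk measurable_id
      exact (measurable_integral_P hφ).comp hm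
  refine ⟨⟨fun p => (M' p.1 p.2 : Measure E), hmeas⟩,
    ⟨fun p => inferInstanceAs (IsProbabilityMeasure (M' p.1 p.2 : Measure E))⟩, ?_⟩
  filter_upwards [hGae] with μ hμ t ht
  change (M' t μ : Measure E) = _
  simp only [M', hμ, if_true, hce t ht]

lemma averaged_solution {b : ℝ → E → E} {T : ℝ} (hT : 0 < T) (hb : BorelLocIntegrable b T)
    {ν : Measure (ProbabilityMeasure E)} [SigmaFinite ν]
    {M : ℝ → ProbabilityMeasure E → ProbabilityMeasure E} (hM : IsMeasureRLF b T ν M)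
    {A : Set (ProbabilityMeasure E)} (hAfin : ν A < ⊤) :
    ∃ w : ℝ → Measure E, InL1LinftyClass T w ∧ WeaklyContinuous T w ∧
      SolvesContinuityEquation b T w ∧ w 0 = expectation (ν.restrict A) ∧
      ∀ t ∈ Icc 0 T, ∀ s, MeasurableSet s → w t s = ∫⁻ μ in A, (M t μ : Measure E) s ∂ν := by
  obtain ⟨κ, hκ, hκM⟩ := exists_kernel hT hM
  obtain ⟨h1, h2, C, hC⟩ := hM
  have hfm : IsFiniteMeasure (ν.restrict A) := ⟨by simpa using hAfin⟩
  have hκm : ∀ t, Measurable fun μ => κ (t, μ) := fun t =>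
    κ.measurable.comp (measurable_prodMk_left (x := t))
  have hκA := ae_restrict_of_ae (s := A) hκM
  have h1A := ae_restrict_of_ae (s := A) h1
  have happ : ∀ t ∈ Icc 0 T, ∀ s, MeasurableSet s →
      ((ν.restrict A).bind fun μ => κ (t, μ)) s = ∫⁻ μ in A, (M t μ : Measure E) s ∂ν := by
    intro t ht s hs
    rw [Measure.bind_apply hs (hκm t).aemeasurable]
    refine lintegral_congr_ae ?_
    filter_upwards [hκA] with μ hμ
    rw [hμ t ht]
  have hle : ∀ t ∈ Icc 0 T, ((ν.restrict A).bind fun μ => κ (t, μ)) ≤ C • (volume : Measure E) := by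
    intro t ht
    refine le_trans ?_ (hC t ht)
    rw [expectation_map (h2 t ht)]
    refine Measure.le_iff.2 fun s hs => ?_
    have hm : AEMeasurable (fun μ => (M t μ : Measure E)) ν :=
      measurable_coeP.comp_aemeasurable (h2 t ht)
    rw [happ t ht s hs, Measure.bind_apply hs hm]
    exact lintegral_mono' Measure.restrict_le_self le_rfl
  refine ⟨fun t => (ν.restrict A).bind fun μ => κ (t, μ), ?_, ?_, ?_, ?_, happ⟩
  · refine ⟨max C (ν A).toNNReal, fun t ht => ⟨?_, ?_⟩⟩
    · rw [Measure.bind_apply MeasurableSet.univ (hκm t).aemeasurable]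
      simp only [measure_univ, lintegral_const, one_mul, Measure.restrict_apply_univ]
      rw [ENNReal.coe_max, ENNReal.coe_toNNReal hAfin.ne]
      exact le_max_right _ _
    · refine (hle t ht).trans (Measure.le_iff.2 fun s hs => ?_)
      simp only [Measure.smul_apply]
      exact mul_le_mul_left (ENNReal.coe_le_coe.2 (le_max_left C _)) _
  · refine avg_weaklyContinuous κ _ ?_
    filter_upwards [hκA, h1A] with μ hμ h1μ φ hφ hφc
    exact (h1μ.2.2.1 φ hφ hφc).congr fun t ht => by simp only [hμ t ht]
  · refine avg_solves_s3 hb κ _ (fun R => avg_finite_s3 hb κ _ C hle R) ?_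
    filter_upwards [hκA, h1A] with μ hμ h1μ φ hφ hφc ψ hψ hψc hψs
    refine Eq.trans (setIntegral_congr_fun measurableSet_Ioo fun t ht => ?_)
      (h1μ.2.2.2 φ hφ hφc ψ hψ hψc hψs)
    simp only [hμ t (Ioo_subset_Icc_self ht)]
  · refine Measure.bind_congr_right ?_
    filter_upwards [hκA, h1A] with μ hμ h1μ
    rw [hμ 0 ⟨le_rfl, hT.le⟩, h1μ.1]

lemma measureRLF_unique {b : ℝ → E → E} {T : ℝ} (hT : 0 < T) (hb : BorelLocIntegrable b T)
    (huniq : CEUniqueness b T)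
    {ν : Measure (ProbabilityMeasure E)} [SigmaFinite ν]
    {M₁ M₂ : ℝ → ProbabilityMeasure E → ProbabilityMeasure E} (hM₁ : IsMeasureRLF b T ν M₁)
    (hM₂ : IsMeasureRLF b T ν M₂) :
    ∀ᵐ μ ∂ν, ∀ t ∈ Icc 0 T, (M₁ t μ : Measure E) = (M₂ t μ : Measure E) := by
  -- equality at a fixed time
  have hfix : ∀ t ∈ Icc 0 T, ∀ᵐ μ ∂ν, (M₁ t μ : Measure E) = (M₂ t μ : Measure E) := by
    intro t ht
    have hset : ∀ s : Set E, MeasurableSet s →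
        ∀ᵐ μ ∂ν, (M₁ t μ : Measure E) s = (M₂ t μ : Measure E) s := by
      intro s hs
      refine ae_eq_of_forall_setLIntegral_eq_of_sigmaFinite₀
        (f := fun μ => (M₁ t μ : Measure E) s) (g := fun μ => (M₂ t μ : Measure E) s) ?_ ?_ ?_
      · exact (Measure.measurable_coe hs).comp_aemeasurable
          (measurable_coeP.comp_aemeasurable (hM₁.2.1 t ht))
      · exact (Measure.measurable_coe hs).comp_aemeasurable
          (measurable_coeP.comp_aemeasurable (hM₂.2.1 t ht))
      · intro A hA hAfin
        obtain ⟨w₁, a1, a2, a3, a4, a5⟩ := averaged_solution hT hb hM₁ hAfin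
        obtain ⟨w₂, b1, b2, b3, b4, b5⟩ := averaged_solution hT hb hM₂ hAfin
        have := huniq w₁ w₂ a1 b1 a2 b2 a3 b3 (a4.trans b4.symm) t ht
        rw [← a5 t ht s hs, ← b5 t ht s hs, this]
    let S := generateSetAlgebra (MeasurableSpace.countableGeneratingSet E)
    have hSc : S.Countable :=
      countable_generateSetAlgebra (MeasurableSpace.countable_countableGeneratingSet)
    have hSgen : ‹MeasureSpace E›.toMeasurableSpace = MeasurableSpace.generateFrom S := by
      rw [generateFrom_generateSetAlgebra_eq]
      exact (MeasurableSpace.generateFrom_countableGeneratingSet (α := E)).symm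
    have hSm : ∀ s ∈ S, MeasurableSet s := fun s hs => by
      rw [hSgen]; exact MeasurableSpace.measurableSet_generateFrom hs
    have hall : ∀ᵐ μ ∂ν, ∀ s ∈ S, (M₁ t μ : Measure E) s = (M₂ t μ : Measure E) s :=
      (ae_ball_iff hSc).2 fun s hs => hset s (hSm s hs)
    filter_upwards [hall] with μ hμ
    exact ext_of_generate_finite S hSgen
      (fun s hs u hu _ => isSetAlgebra_generateSetAlgebra.inter_mem hs hu) hμ (by simp)
  let c : ℝ → ℝ := fun t => (projIcc 0 T hT.le t : ℝ)
  have hcm : ∀ t, c t ∈ Icc 0 T := fun t => (projIcc 0 T hT.le t).2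
  have hcc : Continuous c := continuous_subtype_val.comp continuous_projIcc
  have hce : ∀ t ∈ Icc 0 T, c t = t := fun t ht => by simp [c, projIcc_of_mem _ ht]
  have hq : ∀ᵐ μ ∂ν, ∀ q : ℚ, (M₁ (c q) μ : Measure E) = (M₂ (c q) μ : Measure E) :=
    ae_all_iff.2 fun q => hfix _ (hcm q)
  filter_upwards [hq, hM₁.1, hM₂.1] with μ hμ h1 h2 t ht
  refine Measure.ext_of_integral_eq_on_compactlySupported fun f => ?_
  have e1 := (h1.2.2.1 f f.continuous f.hasCompactSupport).comp_continuous hcc hcm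
  have e2 := (h2.2.2.1 f f.continuous f.hasCompactSupport).comp_continuous hcc hcm
  have := congrFun (Continuous.ext_on (Rat.denseRange_cast (𝕜 := ℝ)) e1 e2 (by
    rintro _ ⟨q, rfl⟩
    simp only [Function.comp_apply, hμ q])) t
  simpa only [Function.comp_apply, hce t ht] using this

end Main
section Existence

set_option linter.unusedSectionVars false

open ProbabilityTheory

variable [BorelSpace E] [FiniteDimensional ℝ E] [SigmaFinite (volume : Measure E)]

lemma ae_ae_of_ae_expectation {ν : Measure (ProbabilityMeasure E)} {p : E → Prop}
    (h : ∀ᵐ x ∂(expectation ν), p x) : ∀ᵐ μ : ProbabilityMeasure E ∂ν, ∀ᵐ x ∂(μ : Measure E), p x := by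
  let κ : Kernel (ProbabilityMeasure E) E := ⟨fun μ => (μ : Measure E), measurable_coeP⟩
  exact Measure.ae_ae_of_ae_comp (κ := κ) h

lemma exists_measureRLF {b : ℝ → E → E} {T : ℝ} (hT : 0 < T) (hb : BorelLocIntegrable b T)
    {ν : Measure (ProbabilityMeasure E)} [SigmaFinite ν] (hreg : IsRegularOnP ν)
    {X : ℝ → E → E} (hX : IsRLF b T (expectation ν) X) :
    ∃ M : ℝ → ProbabilityMeasure E → ProbabilityMeasure E, IsMeasureRLF b T ν M ∧
      ∀ᵐ μ ∂ν, ∀ t ∈ Icc 0 T, (M t μ : Measure E) = Measure.map (X t) (μ : Measure E) := by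
  classical
  obtain ⟨h1, h2, C, hC⟩ := hX
  have hsf : SFinite (expectation ν) := by
    obtain ⟨C', hC'⟩ := hreg
    have : SigmaFinite (C' • (volume : Measure E)) := inferInstance
    have : SigmaFinite (expectation ν) := Measure.sigmaFinite_of_le _ hC'
    infer_instance
  let c : ℝ → ℝ := fun t => (projIcc 0 T hT.le t : ℝ)
  have hcm : ∀ t, c t ∈ Icc 0 T := fun t => (projIcc 0 T hT.le t).2
  have hcc : Continuous c := continuous_subtype_val.comp continuous_projIcc
  have hce : ∀ t ∈ Icc 0 T, c t = t := fun t ht => by simp [c, projIcc_of_mem _ ht]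
  have hgood : ∀ᵐ x ∂(expectation ν), (X 0 x = x ∧
      IntegrableOn (fun s => b s (X s x)) (Icc 0 T) ∧
      ∀ t ∈ Icc 0 T, X t x = x + ∫ s in (0:ℝ)..t, b s (X s x)) ∧
      ∀ q : ℚ, X (c q) x = (h2 (c q) (hcm q)).mk _ x := by
    have : ∀ᵐ x ∂(expectation ν), ∀ q : ℚ, X (c q) x = (h2 (c q) (hcm q)).mk _ x :=
      ae_all_iff.2 fun q => (h2 (c q) (hcm q)).ae_eq_mk
    filter_upwards [h1, this] with x h h' using ⟨h, h'⟩
  obtain ⟨G, hGm, hGae, hG⟩ := exists_good_set hgood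
  let X' : ℝ → E → E := fun t x => if x ∈ G then X (c t) x else x
  have hX'G : ∀ x ∈ G, ∀ t ∈ Icc 0 T, X' t x = X t x := fun x hx t ht => by
    simp only [X', hx, if_true, hce t ht]
  have hX'cont : ∀ x, Continuous fun t => X' t x := by
    intro x
    by_cases hx : x ∈ G
    · simp only [X', hx, if_true]
      have hc : ContinuousOn (fun t => X t x) (Icc 0 T) := by
        have hi := (hG x hx).1.2.1
        have : ContinuousOn (fun t => x + ∫ s in (0:ℝ)..t, b s (X s x)) (Icc 0 T) := by
          refine continuousOn_const.add ?_
          have hi' : IntegrableOn (fun s => b s (X s x)) (uIcc 0 T) := by rwa [uIcc_of_le hT.le]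
          have := intervalIntegral.continuousOn_primitive_interval hi'
          rwa [uIcc_of_le hT.le] at this
        exact this.congr fun t ht => (hG x hx).1.2.2 t ht
      exact hc.comp_continuous hcc hcm
    · simp only [X', hx, if_false]
      exact continuous_const
  have hX'm : Measurable (uncurry X') := by
    refine measurable_uncurry_of_dense X' hX'cont fun q => ?_
    have : X' q = fun x => if x ∈ G then (h2 (c q) (hcm q)).mk _ x else x := by
      ext1 x
      by_cases hx : x ∈ G
      · simp only [X', hx, if_true]
        exact (hG x hx).2 q
      · simp only [X', hx, if_false]
    rw [this]
    exact Measurable.ite hGm (h2 (c q) (hcm q)).measurable_mk measurable_id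
  have hX'mt : ∀ t, Measurable (X' t) := fun t => hX'm.comp (measurable_prodMk_left (x := t))
  let κ : Kernel (ℝ × E) E := Kernel.deterministic (uncurry X') hX'm
  have hκ : ∀ t x, κ (t, x) = Measure.dirac (X' t x) := fun t x => by
    simp only [κ, Kernel.deterministic_apply, uncurry]
  have hbind : ∀ (ρ : Measure E) t, (ρ.bind fun x => κ (t, x)) = Measure.map (X' t) ρ := by
    intro ρ t
    simp_rw [hκ]
    exact Measure.bind_dirac_eq_map ρ (hX'mt t)
  have hmapE : ∀ t ∈ Icc 0 T, Measure.map (X' t) (expectation ν) ≤ C • (volume : Measure E) := by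
    intro t ht
    refine le_trans (le_of_eq (Measure.map_congr ?_)) (hC t ht)
    filter_upwards [hGae] with x hx using hX'G x hx t ht
  have hGμ := ae_ae_of_ae_expectation hGae
  let M : ℝ → ProbabilityMeasure E → ProbabilityMeasure E := fun t μ =>
    ⟨Measure.map (X' t) (μ : Measure E), Measure.isProbabilityMeasure_map (hX'mt t).aemeasurable⟩
  have hMdef : ∀ t μ, (M t μ : Measure E) = Measure.map (X' t) (μ : Measure E) := fun _ _ => rfl
  have hMm : ∀ t, Measurable (M t) := fun t =>
    Measurable.subtype_mk ((Measure.measurable_map _ (hX'mt t)).comp measurable_coeP)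
  -- local integrability of `b` along the averaged flow
  have hfinae : ∀ᵐ μ : ProbabilityMeasure E ∂ν, ∀ n : ℕ, ∫⁻ t in Icc 0 T, ∫⁻ x, ∫⁻ y in closedBall (0:E) n, ‖b t y‖ₑ ∂κ (t, x)
      ∂(μ : Measure E) < ⊤ := by
    rw [ae_all_iff]
    intro n
    have hm := measurable_inner_norm hb κ n
    have hf := avg_finite_s3 hb κ (expectation ν) C (fun t ht => by rw [hbind]; exact hmapE t ht) n
    rw [lintegral_lintegral_swap hm.aemeasurable] at hf
    have hm2 : Measurable fun x : E =>
        ∫⁻ t in Icc 0 T, ∫⁻ y in closedBall (0:E) n, ‖b t y‖ₑ ∂κ (t, x) :=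
      hm.lintegral_prod_left'
    rw [expectation, Measure.lintegral_bind measurable_coeP.aemeasurable hm2.aemeasurable] at hf
    have := ae_lt_top ((Measure.measurable_lintegral hm2).comp measurable_coeP) hf.ne
    filter_upwards [this] with μ hμ
    rw [lintegral_lintegral_swap hm.aemeasurable]
    exact hμ
  have hfinae' : ∀ᵐ μ : ProbabilityMeasure E ∂ν, ∀ R : ℝ, ∫⁻ t in Icc 0 T, ∫⁻ x, ∫⁻ y in closedBall (0:E) R, ‖b t y‖ₑ ∂κ (t, x)
      ∂(μ : Measure E) < ⊤ := by
    filter_upwards [hfinae] with μ hμ R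
    obtain ⟨n, hn⟩ := exists_nat_ge R
    refine lt_of_le_of_lt ?_ (hμ n)
    exact lintegral_mono fun t => lintegral_mono fun x =>
      lintegral_mono_set (closedBall_subset_closedBall hn)
  refine ⟨M, ⟨?_, fun t _ => (hMm t).aemeasurable, C, fun t ht => ?_⟩, ?_⟩
  · filter_upwards [hfinae', hGμ] with μ hμ hμG
    have hcurve : ∀ᵐ x ∂(μ : Measure E), SolvesContinuityEquation b T fun t => κ (t, x) := by
      filter_upwards [hμG] with x hx φ hφ hφc ψ hψ hψc hψs
      have := curve_weak hT x _ (hG x hx).1.2.1 (fun t => X t x) (hG x hx).1.2.2 φ hφ hφc ψ hψ hψs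
      refine Eq.trans (setIntegral_congr_fun measurableSet_Ioo fun t ht => ?_) this
      simp only [hκ, integral_dirac, hX'G x hx t (Ioo_subset_Icc_self ht)]
    have hwc : ∀ᵐ x ∂(μ : Measure E), WeaklyContinuous T fun t => κ (t, x) := by
      refine Eventually.of_forall fun x φ hφ hφc => ?_
      simp only [hκ, integral_dirac]
      exact (hφ.comp (hX'cont x)).continuousOn
    refine ⟨?_, ?_, ?_, ?_⟩
    · apply Subtype.ext
      change Measure.map (X' 0) (μ : Measure E) = μ
      have : Measure.map (X' 0) (μ : Measure E) = Measure.map id (μ : Measure E) := by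
        refine Measure.map_congr ?_
        filter_upwards [hμG] with x hx
        rw [hX'G x hx 0 ⟨le_rfl, hT.le⟩, (hG x hx).1.1, id]
      rw [this, Measure.map_id]
    · intro R _ a d ha hd
      refine ne_of_lt (lt_of_le_of_lt ?_ (hμ R))
      refine (lintegral_mono_set (Icc_subset_Icc ha.le hd.le)).trans (le_of_eq ?_)
      refine lintegral_congr fun t => ?_
      have hbt : Measurable fun x => (closedBall (0:E) R).indicator (fun x => ‖b t x‖ₑ) x :=
        ((hb.1.comp (measurable_prodMk_left (x := t))).enorm).indicator
          isClosed_closedBall.measurableSet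
      rw [hMdef, ← hbind]
      have := lintegral_bind_section κ (μ : Measure E) t hbt
      simp only [lintegral_indicator (isClosed_closedBall (x := (0:E)) (ε := R)).measurableSet]
        at this
      exact this
    · have := avg_weaklyContinuous κ (μ : Measure E) hwc
      simp only [hbind] at this
      exact this
    · have := avg_solves_s3 hb κ (μ : Measure E) hμ hcurve
      simp only [hbind] at this
      exact this
  · rw [expectation_map (hMm t).aemeasurable]
    refine le_trans (le_of_eq ?_) (hmapE t ht)
    refine Measure.ext fun s hs => ?_
    have hm : AEMeasurable (fun μ => (M t μ : Measure E)) ν := (measurable_coeP.comp (hMm t)).aemeasurable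
    rw [Measure.bind_apply hs hm,
      Measure.map_apply (hX'mt t) hs, expectation,
      Measure.bind_apply (hX'mt t hs) measurable_coeP.aemeasurable]
    refine lintegral_congr fun μ => ?_
    exact Measure.map_apply (hX'mt t) hs
  · filter_upwards [hGμ] with μ hμ t ht
    rw [hMdef]
    refine Measure.map_congr ?_
    filter_upwards [hμ] with x hx using hX'G x hx t ht

end Existence

/-- Representation of the unique `𝛎`-RLF in `P(ℝ^d)`.
If the continuity equation has existence and uniqueness in `L∞₊([0,T]; L¹ ∩ L∞)`,
`𝛎` is a regular measure on `P(ℝ^d)` and `X` is the unique `(E𝛎)`-RLF in `ℝ^d`, then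
a `𝛎`-RLF in `P(ℝ^d)` exists and any `𝛎`-RLF `M` is given, for `𝛎`-a.e. `μ` and all
`t ∈ [0,T]`, by `M t μ = ∫ δ_{X(t,x)} dμ(x) = X(t,·)_♯ μ`. -/
theorem representation_of_nu_RLF_on_P {d : ℕ} (T : ℝ) (hT : 0 < T)
    (b : ℝ → EuclideanSpace ℝ (Fin d) → EuclideanSpace ℝ (Fin d))
    (hb : BorelLocIntegrable b T)
    (hex : CEExistence b T) (huniq : CEUniqueness b T)
    (ν : Measure (ProbabilityMeasure (EuclideanSpace ℝ (Fin d))))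
    [SigmaFinite ν] (hreg : IsRegularOnP ν)
    (X : ℝ → EuclideanSpace ℝ (Fin d) → EuclideanSpace ℝ (Fin d))
    (hX : IsRLF b T (expectation ν) X) :
    (∃ M : ℝ → ProbabilityMeasure (EuclideanSpace ℝ (Fin d)) →
        ProbabilityMeasure (EuclideanSpace ℝ (Fin d)), IsMeasureRLF b T ν M) ∧
    ∀ M : ℝ → ProbabilityMeasure (EuclideanSpace ℝ (Fin d)) →
        ProbabilityMeasure (EuclideanSpace ℝ (Fin d)), IsMeasureRLF b T ν M →
      ∀ᵐ μ ∂ν, ∀ t ∈ Icc 0 T,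
        (M t μ : Measure (EuclideanSpace ℝ (Fin d))) =
          Measure.map (X t) (μ : Measure (EuclideanSpace ℝ (Fin d))) := by
  obtain ⟨M₀, hM₀, hrep⟩ := exists_measureRLF hT hb hreg hX
  refine ⟨⟨M₀, hM₀⟩, fun M hM => ?_⟩
  filter_upwards [hrep, measureRLF_unique hT hb huniq hM hM₀] with μ h1 h2 t ht
  rw [h2 t ht, h1 t ht]

end
end

section
/- Let 𝛎 be a regular nonnegative σ-finite measure on P(ℝ^d) and let X be an (E𝛎)-regular Lagrangian flow in ℝ^d relative to b. Then the map 𝛍(t,μ) := X(t,·)_♯μ = ∫_{ℝ^d} δ_{X(t,x)} dμ(x) is a 𝛎-regular Lagrangian flow in P(ℝ^d) relative to b; in particular E(𝛍(t,·)_♯𝛎) = X(t,·)_♯(E𝛎) ≤ C·L^d for all t ∈ [0,T], and for 𝛎-a.e. μ the curve t ↦ 𝛍(t,μ) is weakly continuous, starts at μ, and solves the continuity equation d/dt μ_t + ∇·(b_t μ_t) = 0 in the sense of distributions. -/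
open MeasureTheory Set Filter Metric Function
open scoped ENNReal NNReal Topology

noncomputable section

variable {E : Type*} [NormedAddCommGroup E] [NormedSpace ℝ E] [MeasureSpace E]

/-- The chain rule along an absolutely continuous integral curve, integrated against a test
function in time. -/
theorem path_identity [CompleteSpace E] {T : ℝ} (hT : 0 < T) {g : ℝ → E}
    (hg : IntegrableOn g (Icc 0 T)) (x : E) {φ : E → ℝ} (hφ : ContDiff ℝ (⊤ : ℕ∞) φ)
    (hφc : HasCompactSupport φ) {ψ : ℝ → ℝ} (hψ : ContDiff ℝ (⊤ : ℕ∞) ψ)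
    (hψs : tsupport ψ ⊆ Ioo 0 T) :
    ∫ t in Ioo 0 T, (deriv ψ t * φ (x + ∫ s in (0:ℝ)..t, g s) +
      ψ t * (fderiv ℝ φ (x + ∫ s in (0:ℝ)..t, g s)) (g t)) = 0 := by
  have hgi : IntervalIntegrable g volume 0 T :=
    (intervalIntegrable_iff_integrableOn_Icc_of_le hT.le).2 hg
  obtain ⟨K, hK⟩ := hφ.lipschitzWith_of_hasCompactSupport hφc (by simp)
  set y : ℝ → E := fun t => x + ∫ s in (0:ℝ)..t, g s with hy
  have hsub : ∀ s ∈ uIcc 0 T, ∀ t ∈ uIcc 0 T, uIcc s t ⊆ uIcc 0 T := fun s hs t ht =>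
    uIcc_subset_uIcc hs ht
  have hN := hgi.norm.absolutelyContinuousOnInterval_intervalIntegral (c := 0) (by simp)
  have hac : AbsolutelyContinuousOnInterval (fun t => φ (y t)) 0 T := by
    have hN' := hN.const_mul (K : ℝ)
    rw [absolutelyContinuousOnInterval_iff] at hN' ⊢
    intro ε hε
    obtain ⟨δ, hδ, H⟩ := hN' ε hε
    refine ⟨δ, hδ, fun e he hlt => lt_of_le_of_lt (Finset.sum_le_sum fun i hi => ?_) (H e he hlt)⟩
    obtain ⟨h1, h2⟩ := he.1 i hi
    have i1 : IntervalIntegrable g volume 0 (e.2 i).1 := hgi.mono_set (hsub _ (by simp) _ h1)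
    have i2 : IntervalIntegrable g volume 0 (e.2 i).2 := hgi.mono_set (hsub _ (by simp) _ h2)
    refine (hK.dist_le_mul _ _).trans ?_
    simp only [Real.dist_eq, ← mul_sub, abs_mul, NNReal.abs_eq]
    gcongr
    rw [intervalIntegral.integral_interval_sub_left i1.norm i2.norm, hy, dist_add_left,
      dist_eq_norm, intervalIntegral.integral_interval_sub_left i1 i2]
    exact intervalIntegral.norm_integral_le_abs_integral_norm
  have hψ1 : ContDiff ℝ 1 ψ := hψ.of_le (by simp)
  have hψac : AbsolutelyContinuousOnInterval ψ 0 T :=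
    hψ1.contDiffOn.absolutelyContinuousOnInterval
  have key := hψac.integral_deriv_mul_eq_sub hac
  have h0 : ψ 0 = 0 := image_eq_zero_of_notMem_tsupport fun h => by simpa using hψs h
  have h1 : ψ T = 0 := image_eq_zero_of_notMem_tsupport fun h => by simpa using hψs h
  rw [h0, h1, zero_mul, zero_mul, sub_zero, intervalIntegral.integral_of_le hT.le,
    integral_Ioc_eq_integral_Ioo] at key
  refine Eq.trans ?_ key
  refine setIntegral_congr_ae measurableSet_Ioo ?_
  filter_upwards [hgi.ae_hasDerivAt_integral] with t ht hmem
  have hmem' : t ∈ uIcc 0 T := by rw [uIcc_of_le hT.le]; exact Ioo_subset_Icc_self hmem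
  have hd : HasDerivAt y (g t) t := (ht hmem' 0 (by simp)).const_add x
  have hφd : HasFDerivAt φ (fderiv ℝ φ (y t)) (y t) :=
    (hφ.differentiable (by simp) (y t)).hasFDerivAt
  have := (hφd.comp_hasDerivAt t hd).deriv
  simp only [Function.comp_def] at this
  rw [this]

/-- A jointly measurable version of a flow with a.e. continuous trajectories. -/
theorem exists_measurable_version [BorelSpace E] {T : ℝ} (hT : 0 < T) {m : Measure E}
    {X : ℝ → E → E} {P : E → Prop} (hP : ∀ᵐ x ∂m, P x)
    (hc : ∀ x, P x → ContinuousOn (fun t => X t x) (Icc 0 T))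
    (hm : ∀ t ∈ Icc 0 T, AEMeasurable (X t) m) :
    ∃ Y : ℝ → E → E, Measurable (Function.uncurry Y) ∧ (∀ x, Continuous fun t => Y t x) ∧
      ∃ G : Set E, MeasurableSet G ∧ m Gᶜ = 0 ∧
        ∀ x ∈ G, P x ∧ ∀ t ∈ Icc 0 T, Y t x = X t x := by
  classical
  have : Nonempty (Icc (0:ℝ) T) := ⟨⟨0, by simp [hT.le]⟩⟩
  let D : ℕ → Icc (0:ℝ) T := TopologicalSpace.denseSeq _
  have hQ : ∀ᵐ x ∂m, P x ∧ ∀ n, X (D n) x = (hm (D n) (D n).2).mk _ x :=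
    hP.and (ae_all_iff.2 fun n => (hm (D n) (D n).2).ae_eq_mk)
  set G : Set E := (toMeasurable m {x | ¬ (P x ∧ ∀ n, X (D n) x = (hm (D n) (D n).2).mk _ x)})ᶜ
    with hG
  have hGm : MeasurableSet G := (measurableSet_toMeasurable _ _).compl
  have hG0 : m Gᶜ = 0 := by
    rw [hG, compl_compl, measure_toMeasurable]
    exact hQ
  have hGQ : ∀ x ∈ G, P x ∧ ∀ n, X (D n) x = (hm (D n) (D n).2).mk _ x := by
    intro x hx
    by_contra h
    exact hx (subset_toMeasurable _ _ h)
  let Y : ℝ → E → E := fun t => G.indicator fun x => X (projIcc 0 T hT.le t) x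
  have hYc : ∀ x, Continuous fun t => Y t x := by
    intro x
    by_cases hx : x ∈ G
    · simp only [Y, indicator_of_mem hx]
      exact (continuousOn_iff_continuous_domRestrict.1 (hc x (hGQ x hx).1)).comp continuous_projIcc
    · simp only [Y, indicator_of_notMem hx]
      exact continuous_const
  have hYI : ∀ t (ht : t ∈ Icc 0 T), ∀ x ∈ G, Y t x = X t x := by
    intro t ht x hx
    simp only [Y, indicator_of_mem hx, projIcc_of_mem hT.le ht]
  have hYp : ∀ t, Y t = Y (projIcc 0 T hT.le t) := by
    intro t
    simp only [Y, projIcc_val]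
  have hYD : ∀ n, Measurable (Y (D n)) := by
    intro n
    have : Y (D n) = G.indicator ((hm (D n) (D n).2).mk _) := by
      funext x
      by_cases hx : x ∈ G
      · rw [hYI _ (D n).2 x hx, indicator_of_mem hx, (hGQ x hx).2 n]
      · simp only [Y, indicator_of_notMem hx]
    rw [this]
    exact (hm (D n) (D n).2).measurable_mk.indicator hGm
  have hYm : ∀ t, Measurable (Y t) := by
    intro t
    rw [hYp]
    obtain ⟨u, hu, hlim⟩ := mem_closure_iff_seq_limit.1
      ((TopologicalSpace.denseRange_denseSeq (Icc (0:ℝ) T)) (projIcc 0 T hT.le t))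
    refine measurable_of_tendsto_metrizable (f := fun n => Y (u n)) (fun n => ?_) ?_
    · obtain ⟨k, hk⟩ := hu n
      rw [← hk]
      exact hYD k
    · rw [tendsto_pi_nhds]
      intro x
      exact ((hYc x).tendsto _).comp ((continuous_subtype_val.tendsto _).comp hlim)
  exact ⟨Y, measurable_uncurry_of_continuous_of_measurable hYc hYm, hYc, G, hGm, hG0,
    fun x hx => ⟨(hGQ x hx).1, fun t ht => hYI t ht x hx⟩⟩

/-- The continuity equation for the pushforward of a single probability measure. -/
theorem pushforward_solves [CompleteSpace E] [SecondCountableTopology E] [BorelSpace E] {T : ℝ}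
    (hT : 0 < T) {b : ℝ → E → E} (hb : Measurable (Function.uncurry b)) {Y : ℝ → E → E}
    (hY : Measurable (Function.uncurry Y)) (μ : Measure E) [IsProbabilityMeasure μ]
    (hode : ∀ᵐ x ∂μ, IntegrableOn (fun s => b s (Y s x)) (Icc 0 T) ∧
      ∀ t ∈ Icc 0 T, Y t x = x + ∫ s in (0:ℝ)..t, b s (Y s x))
    (hfin : ∀ n : ℕ, ∫⁻ t in Icc 0 T, ∫⁻ x in closedBall (0 : E) n, ‖b t x‖ₑ
      ∂(Measure.map (Y t) μ) ≠ ⊤) :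
    SolvesContinuityEquation b T (fun t => Measure.map (Y t) μ) := by
  intro φ hφ hφc ψ hψ hψc hψs
  have hYt : ∀ t, Measurable (Y t) := fun t => hY.of_uncurry_left
  have hbt : ∀ t, Measurable (b t) := fun t => hb.of_uncurry_left
  have hbY : Measurable fun p : ℝ × E => b p.1 (Y p.1 p.2) := hb.comp (measurable_fst.prodMk hY)
  have hφ' : Continuous (fderiv ℝ φ) := hφ.continuous_fderiv (by simp)
  have hψ' : Continuous (deriv ψ) := hψ.continuous_deriv (by simp)
  have hφ'c : HasCompactSupport (fderiv ℝ φ) := hφc.fderiv ℝ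
  obtain ⟨A, hA⟩ := hφ.continuous.bounded_above_of_compact_support hφc
  obtain ⟨A', hA'⟩ := hφ'.bounded_above_of_compact_support hφ'c
  obtain ⟨B, hB⟩ := hψ.continuous.bounded_above_of_compact_support hψc
  obtain ⟨B', hB'⟩ := hψ'.bounded_above_of_compact_support hψc.deriv
  obtain ⟨R, hR⟩ := hφ'c.isBounded.subset_closedBall (0 : E)
  obtain ⟨n, hn⟩ := exists_nat_ge R
  have hsupp : ∀ x, x ∉ closedBall (0 : E) n → fderiv ℝ φ x = 0 := fun x hx =>
    image_eq_zero_of_notMem_tsupport fun h => hx (closedBall_subset_closedBall hn (hR h))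
  have happ : Measurable fun q : (E →L[ℝ] ℝ) × E => q.1 q.2 :=
    isBoundedBilinearMap_apply.continuous.measurable
  have mF1 : Measurable fun p : ℝ × E => deriv ψ p.1 * φ (Y p.1 p.2) :=
    (hψ'.measurable.comp measurable_fst).mul (hφ.continuous.measurable.comp hY)
  have mL : Measurable fun p : ℝ × E => fderiv ℝ φ (Y p.1 p.2) (b p.1 (Y p.1 p.2)) :=
    happ.comp ((hφ'.measurable.comp hY).prodMk hbY)
  have mF2 : Measurable fun p : ℝ × E =>
      ψ p.1 * fderiv ℝ φ (Y p.1 p.2) (b p.1 (Y p.1 p.2)) :=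
    (hψ.continuous.measurable.comp measurable_fst).mul mL
  set τ : Measure ℝ := volume.restrict (Ioo 0 T) with hτ
  have i1 : Integrable (fun p : ℝ × E => deriv ψ p.1 * φ (Y p.1 p.2)) (τ.prod μ) := by
    refine Integrable.of_bound mF1.aestronglyMeasurable (B' * A) (ae_of_all _ fun p => ?_)
    rw [norm_mul]
    exact mul_le_mul (hB' _) (hA _) (norm_nonneg _) ((norm_nonneg _).trans (hB' 0))
  have i2 : Integrable (fun p : ℝ × E => ψ p.1 * fderiv ℝ φ (Y p.1 p.2) (b p.1 (Y p.1 p.2)))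
      (τ.prod μ) := by
    set S : Set (ℝ × E) := (Function.uncurry Y) ⁻¹' closedBall (0 : E) n with hS
    have mS : MeasurableSet S := hY measurableSet_closedBall
    have mI : Measurable (S.indicator fun p : ℝ × E => b p.1 (Y p.1 p.2)) := hbY.indicator mS
    have hI : Integrable (S.indicator fun p : ℝ × E => b p.1 (Y p.1 p.2)) (τ.prod μ) := by
      refine ⟨mI.aestronglyMeasurable, ?_⟩
      rw [hasFiniteIntegral_iff_enorm, lintegral_prod _ mI.enorm.aemeasurable]
      refine lt_of_le_of_lt ?_ (lt_top_iff_ne_top.2 (hfin n))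
      rw [hτ]
      refine (lintegral_mono_set Ioo_subset_Icc_self).trans (lintegral_mono fun t => ?_)
      simp only
      rw [setLIntegral_map measurableSet_closedBall (hbt t).enorm (hYt t),
        ← lintegral_indicator ((hYt t) measurableSet_closedBall)]
      refine lintegral_mono fun x => ?_
      by_cases hx : Y t x ∈ closedBall (0 : E) n
      · have h1 : (t, x) ∈ S := hx
        have h2 : x ∈ Y t ⁻¹' closedBall (0 : E) n := hx
        rw [indicator_of_mem h1, indicator_of_mem h2]
      · have h1 : (t, x) ∉ S := hx
        rw [indicator_of_notMem h1]
        simp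
    refine (hI.norm.const_mul (B * A')).mono' mF2.aestronglyMeasurable (ae_of_all _ fun p => ?_)
    by_cases hp : p ∈ S
    · rw [indicator_of_mem hp, norm_mul, mul_assoc]
      refine mul_le_mul (hB _) ?_ (norm_nonneg _) ((norm_nonneg _).trans (hB 0))
      exact (ContinuousLinearMap.le_opNorm _ _).trans
        (mul_le_mul_of_nonneg_right (hA' _) (norm_nonneg _))
    · have h0 : fderiv ℝ φ (Y p.1 p.2) = 0 := hsupp _ hp
      rw [indicator_of_notMem hp, h0]
      simp
  have e1 : ∫ t in Ioo 0 T, (deriv ψ t * ∫ x, φ x ∂(Measure.map (Y t) μ) +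
        ψ t * ∫ x, (fderiv ℝ φ x) (b t x) ∂(Measure.map (Y t) μ)) =
      ∫ t, ∫ x, (deriv ψ t * φ (Y t x) + ψ t * fderiv ℝ φ (Y t x) (b t (Y t x))) ∂μ ∂τ := by
    refine integral_congr_ae ?_
    filter_upwards [i1.prod_right_ae, i2.prod_right_ae] with t h1 h2
    have hLt : Measurable fun x => (fderiv ℝ φ x) (b t x) :=
      happ.comp (hφ'.measurable.prodMk (hbt t))
    rw [integral_add h1 h2, integral_const_mul, integral_const_mul,
      integral_map (hYt t).aemeasurable hφ.continuous.aestronglyMeasurable,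
      integral_map (hYt t).aemeasurable hLt.aestronglyMeasurable]
  rw [e1, integral_integral_swap (i1.add i2)]
  refine integral_eq_zero_of_ae ?_
  filter_upwards [hode] with x hx
  have := path_identity hT hx.1 x hφ hφc hψ hψs
  refine Eq.trans ?_ this
  refine setIntegral_congr_fun measurableSet_Ioo fun t ht => ?_
  rw [← hx.2 t (Ioo_subset_Icc_self ht)]

/-- The time-space integral of `b` along the flow, written as an integral over trajectories. -/
def trajIntegral (b : ℝ → E → E) (T : ℝ) (Y : ℝ → E → E) (n : ℕ) (x : E) : ℝ≥0∞ :=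
  ∫⁻ t in Icc 0 T, (closedBall (0 : E) n).indicator (fun z => ‖b t z‖ₑ) (Y t x)

theorem measurable_traj_integrand [BorelSpace E] {b : ℝ → E → E}
    (hb : Measurable (Function.uncurry b)) {Y : ℝ → E → E}
    (hY : Measurable (Function.uncurry Y)) (n : ℕ) :
    Measurable fun p : ℝ × E =>
      (closedBall (0 : E) n).indicator (fun z => ‖b p.1 z‖ₑ) (Y p.1 p.2) := by
  have hbY : Measurable fun p : ℝ × E => b p.1 (Y p.1 p.2) := hb.comp (measurable_fst.prodMk hY)
  have hS : MeasurableSet ((Function.uncurry Y) ⁻¹' closedBall (0 : E) n) :=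
    hY measurableSet_closedBall
  exact hbY.enorm.indicator hS

theorem measurable_trajIntegral [BorelSpace E] {b : ℝ → E → E} {T : ℝ}
    (hb : Measurable (Function.uncurry b)) {Y : ℝ → E → E}
    (hY : Measurable (Function.uncurry Y)) (n : ℕ) :
    Measurable (trajIntegral b T Y n) :=
  (measurable_traj_integrand hb hY n).lintegral_prod_left'

theorem lintegral_trajIntegral [BorelSpace E] {b : ℝ → E → E} {T : ℝ}
    (hb : Measurable (Function.uncurry b)) {Y : ℝ → E → E}
    (hY : Measurable (Function.uncurry Y)) (n : ℕ) (m : Measure E) [SFinite m] :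
    ∫⁻ x, trajIntegral b T Y n x ∂m =
      ∫⁻ t in Icc 0 T, ∫⁻ x in closedBall (0 : E) n, ‖b t x‖ₑ ∂(Measure.map (Y t) m) := by
  have hYt : ∀ t, Measurable (Y t) := fun t => hY.of_uncurry_left
  have hbt : ∀ t, Measurable (b t) := fun t => hb.of_uncurry_left
  unfold trajIntegral
  rw [← lintegral_lintegral_swap (f := fun t x =>
    (closedBall (0 : E) n).indicator (fun z => ‖b t z‖ₑ) (Y t x))
    (measurable_traj_integrand hb hY n).aemeasurable]
  refine lintegral_congr fun t => ?_
  rw [← lintegral_indicator measurableSet_closedBall,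
    lintegral_map ((hbt t).enorm.indicator measurableSet_closedBall) (hYt t)]

/-- The pushforward of an `(E𝛎)`-RLF is a `𝛎`-RLF in `P(ℝ^d)`.
If `𝛎` is regular and `X` is an `(E𝛎)`-RLF in `ℝ^d` relative to `b`, then
`𝛍(t,μ) := X(t,·)_♯ μ = ∫ δ_{X(t,x)} dμ(x)` is a `𝛎`-RLF in `P(ℝ^d)` relative to `b`;
in particular `E(𝛍(t,·)_♯𝛎) = X(t,·)_♯(E𝛎) ≤ C·L^d` for all `t ∈ [0,T]`, and for `𝛎`-a.e. `μ`
the curve `t ↦ 𝛍(t,μ)` is weakly continuous, starts at `μ`, and solves the continuity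
equation distributionally (all of which is part of `IsMeasureRLF`). -/
theorem pushforward_RLF_is_measure_RLF {d : ℕ} (T : ℝ) (hT : 0 < T)
    (b : ℝ → EuclideanSpace ℝ (Fin d) → EuclideanSpace ℝ (Fin d))
    (hb : BorelLocIntegrable b T)
    (ν : Measure (ProbabilityMeasure (EuclideanSpace ℝ (Fin d))))
    [SigmaFinite ν] (hreg : IsRegularOnP ν)
    (X : ℝ → EuclideanSpace ℝ (Fin d) → EuclideanSpace ℝ (Fin d))
    (hX : IsRLF b T (expectation ν) X) :
    ∃ M : ℝ → ProbabilityMeasure (EuclideanSpace ℝ (Fin d)) →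
        ProbabilityMeasure (EuclideanSpace ℝ (Fin d)),
      (∀ᵐ μ ∂ν, ∀ t ∈ Icc 0 T,
        (M t μ : Measure (EuclideanSpace ℝ (Fin d))) =
          Measure.map (X t) (μ : Measure (EuclideanSpace ℝ (Fin d)))) ∧
      IsMeasureRLF b T ν M ∧
      (∀ t ∈ Icc 0 T,
        expectation (Measure.map (M t) ν) = Measure.map (X t) (expectation ν)) ∧
      ∃ C : ℝ≥0, ∀ t ∈ Icc 0 T,
        expectation (Measure.map (M t) ν) ≤
          C • (volume : Measure (EuclideanSpace ℝ (Fin d))) := by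
  classical
  obtain ⟨hode, hXm, C, hC⟩ := hX
  obtain ⟨C₀, hC₀⟩ := hreg
  have hbm := hb.1
  have hcoe : Measurable fun μ : ProbabilityMeasure (EuclideanSpace ℝ (Fin d)) =>
      (μ : Measure (EuclideanSpace ℝ (Fin d))) := measurable_subtype_coe
  set m := expectation ν with hm
  have : SigmaFinite m := by
    exact Measure.sigmaFinite_of_le _ hC₀
  obtain ⟨Y, hY, hYc, G, hGm, hG0, hG⟩ := exists_measurable_version hT hode (by
    intro x hx
    have hint : IntervalIntegrable (fun s => b s (X s x)) volume 0 T :=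
      (intervalIntegrable_iff_integrableOn_Icc_of_le hT.le).2 hx.2.1
    have h1 := intervalIntegral.continuousOn_primitive_interval' hint left_mem_uIcc
    rw [uIcc_of_le hT.le] at h1
    exact (continuousOn_const.add h1).congr hx.2.2) hXm
  have hYt : ∀ t, Measurable (Y t) := fun t => hY.of_uncurry_left
  have hYX : ∀ t ∈ Icc 0 T, ∀ μ : Measure (EuclideanSpace ℝ (Fin d)), μ Gᶜ = 0 →
      Measure.map (Y t) μ = Measure.map (X t) μ := by
    intro t ht μ hμ
    refine Measure.map_congr ?_
    have : ∀ᵐ x ∂μ, x ∈ G := hμ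
    filter_upwards [this] with x hx using (hG x hx).2 t ht
  let M : ℝ → ProbabilityMeasure (EuclideanSpace ℝ (Fin d)) →
      ProbabilityMeasure (EuclideanSpace ℝ (Fin d)) := fun t μ =>
    ⟨Measure.map (Y t) (μ : Measure _),
      Measure.isProbabilityMeasure_map (hYt t).aemeasurable⟩
  have hMm : ∀ t, Measurable (M t) := fun t =>
    ((Measure.measurable_map _ (hYt t)).comp hcoe).subtype_mk
  have hMexp : ∀ t ∈ Icc 0 T, expectation (Measure.map (M t) ν) = Measure.map (X t) m := by
    intro t ht
    rw [← hYX t ht m hG0]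
    ext s hs
    have hcs : Measurable fun μ : ProbabilityMeasure (EuclideanSpace ℝ (Fin d)) =>
        (μ : Measure (EuclideanSpace ℝ (Fin d))) s := (Measure.measurable_coe hs).comp hcoe
    rw [expectation, Measure.bind_apply hs hcoe.aemeasurable, lintegral_map hcs (hMm t), Measure.map_apply (hYt t) hs,
      hm, expectation, Measure.bind_apply (hYt t hs) hcoe.aemeasurable]
    exact lintegral_congr fun μ => Measure.map_apply (hYt t) hs
  have hGν : ∀ᵐ (μ : ProbabilityMeasure (EuclideanSpace ℝ (Fin d))) ∂ν, (μ : Measure (EuclideanSpace ℝ (Fin d))) Gᶜ = 0 :=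
    Measure.ae_ae_of_ae_bind hcoe.aemeasurable (show ∀ᵐ x ∂m, x ∈ G from hG0)
  have hfin : ∀ᵐ (μ : ProbabilityMeasure (EuclideanSpace ℝ (Fin d))) ∂ν, ∀ n : ℕ, ∫⁻ t in Icc 0 T,
      ∫⁻ x in closedBall (0 : EuclideanSpace ℝ (Fin d)) n, ‖b t x‖ₑ
        ∂(Measure.map (Y t) (μ : Measure (EuclideanSpace ℝ (Fin d)))) ≠ ⊤ := by
    rw [ae_all_iff]
    intro n
    have htot : ∫⁻ x, trajIntegral b T Y n x ∂m ≠ ⊤ := by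
      rw [lintegral_trajIntegral hbm hY n m]
      have hle : ∫⁻ t in Icc 0 T, ∫⁻ x in closedBall (0 : EuclideanSpace ℝ (Fin d)) n, ‖b t x‖ₑ
            ∂(Measure.map (Y t) m) ≤
          ∫⁻ t in Icc 0 T, (C : ℝ≥0∞) *
            ∫⁻ x in closedBall (0 : EuclideanSpace ℝ (Fin d)) n, ‖b t x‖ₑ := by
        refine setLIntegral_mono' measurableSet_Icc fun t ht => ?_
        rw [hYX t ht m hG0]
        refine (lintegral_mono' (Measure.restrict_mono_measure (hC t ht) _) le_rfl).trans ?_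
        rw [Measure.restrict_smul, lintegral_smul_measure, ENNReal.smul_def, smul_eq_mul]
      refine ne_top_of_le_ne_top ?_ hle
      rw [lintegral_const_mul' _ _ ENNReal.coe_ne_top]
      refine ENNReal.mul_ne_top ENNReal.coe_ne_top ?_
      have h2 := (hb.2 n).2
      rw [hasFiniteIntegral_iff_enorm, Measure.volume_eq_prod, ← Measure.prod_restrict,
        lintegral_prod _ hbm.enorm.aemeasurable] at h2
      exact h2.ne
    rw [hm, expectation, Measure.lintegral_bind hcoe.aemeasurable
      (measurable_trajIntegral hbm hY n).aemeasurable] at htot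
    have hmeas := (Measure.measurable_lintegral (measurable_trajIntegral (T := T) hbm hY n)).comp hcoe
    filter_upwards [ae_lt_top hmeas htot] with μ hμ
    rw [← lintegral_trajIntegral hbm hY n]
    exact hμ.ne
  refine ⟨M, ?_, ⟨?_, fun t _ => (hMm t).aemeasurable, C, fun t ht => ?_⟩, hMexp, C,
    fun t ht => ?_⟩
  · filter_upwards [hGν] with μ hμ t ht using hYX t ht _ hμ
  · filter_upwards [hGν, hfin] with μ hμ hμfin
    have hμG : ∀ᵐ x ∂(μ : Measure (EuclideanSpace ℝ (Fin d))), x ∈ G := hμ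
    refine ⟨?_, ?_, ?_, ?_⟩
    · apply Subtype.ext
      change Measure.map (Y 0) (μ : Measure (EuclideanSpace ℝ (Fin d))) = μ
      rw [hYX 0 ⟨le_rfl, hT.le⟩ _ hμ]
      conv_rhs => rw [← Measure.map_id (μ := (μ : Measure (EuclideanSpace ℝ (Fin d))))]
      refine Measure.map_congr ?_
      filter_upwards [hμG] with x hx using (hG x hx).1.1
    · intro R _ a c ha hc
      obtain ⟨n, hn⟩ := exists_nat_ge R
      refine ne_top_of_le_ne_top (hμfin n) ?_
      refine (lintegral_mono_set (Icc_subset_Icc ha.le hc.le)).trans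
        (lintegral_mono fun t => ?_)
      exact lintegral_mono_set (closedBall_subset_closedBall hn)
    · intro φ hφ hφc
      obtain ⟨A, hA⟩ := hφ.bounded_above_of_compact_support hφc
      have h1 : (fun t => ∫ x, φ x ∂(M t μ : Measure (EuclideanSpace ℝ (Fin d)))) =
          fun t => ∫ x, φ (Y t x) ∂(μ : Measure (EuclideanSpace ℝ (Fin d))) := by
        funext t
        exact integral_map (hYt t).aemeasurable hφ.aestronglyMeasurable
      rw [h1]
      refine Continuous.continuousOn ?_
      refine continuous_of_dominated (bound := fun _ => A)
        (fun t => (hφ.measurable.comp (hYt t)).aestronglyMeasurable)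
        (fun t => ae_of_all _ fun x => hA _) (integrable_const _)
        (ae_of_all _ fun x => hφ.comp (hYc x))
    · refine pushforward_solves hT hbm hY _ ?_ hμfin
      filter_upwards [hμG] with x hx
      obtain ⟨⟨-, h1, h2⟩, h3⟩ := hG x hx
      refine ⟨h1.congr_fun (fun s hs => by simp only [h3 s hs]) measurableSet_Icc, ?_⟩
      intro t ht
      rw [h3 t ht, h2 t ht]
      congr 1
      refine intervalIntegral.integral_congr fun s hs => ?_
      rw [uIcc_of_le ht.1] at hs
      simp only [h3 s ⟨hs.1, hs.2.trans ht.2⟩]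
  · rw [hMexp t ht]
    exact hC t ht
  · rw [hMexp t ht]
    exact hC t ht

end
end
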